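/- Let n ≥ 2, and let A = (1/2, 1/2), B = (1/2, (n−1)/(2(n+1))), D = (1, 0) in the (1/p, 1/q) plane. Suppose (1/p, 1/q) lies in the open line segment from A to B or in the open line segment from A to D, and set γ = (n+1)/(2q) − (n−1)/(2p'). Then there is a constant C such that for all measurable g on 𝕊^{n-1}, ‖ x ↦ ĝdσ(x) ⟨x⟩^{−γ} ‖_{L^{q,∞}(ℝⁿ)} ≤ C ‖g‖_{L^{p,1}(𝕊^{n-1})}, where ⟨x⟩ = (1+|x|²)^{1/2}. -/

import Mathlib

open MeasureTheory Metric Real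
open scoped ENNReal NNReal RealInnerProductSpace

noncomputable section

abbrev Euc (n : ℕ) := EuclideanSpace ℝ (Fin n)

/-- Surface measure on the unit sphere `𝕊^{n-1}`. -/
def sphMeasure (n : ℕ) : Measure (Euc n) :=
  (μH[(n : ℝ) - 1]).restrict (sphere (0 : Euc n) 1)

/-- Fourier extension operator. -/
def extOp (n : ℕ) (g : Euc n → ℂ) (x : Euc n) : ℂ :=
  ∫ ξ, Complex.exp (Complex.I * (⟪x, ξ⟫ : ℝ)) * g ξ ∂(sphMeasure n)

/-- The Lorentz norm `‖F‖_{L^{p,r}(μ)} = (p ∫₀^∞ λ^r μ{|F|>λ}^{r/p} dλ/λ)^{1/r}`. -/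
def lorentzNorm {α : Type*} [MeasurableSpace α] (μ : Measure α) (p r : ℝ)
    (F : α → ℂ) : ℝ≥0∞ :=
  (ENNReal.ofReal p *
      ∫⁻ l in Set.Ioi (0 : ℝ),
        ENNReal.ofReal l ^ r * μ {x | l < ‖F x‖} ^ (r / p) / ENNReal.ofReal l) ^ (1 / r)

/-- The weak-type Lorentz norm `‖F‖_{L^{q,∞}(μ)} = sup_{λ>0} λ μ{|F|>λ}^{1/q}`. -/
def wLorentzNorm {α : Type*} [MeasurableSpace α] (μ : Measure α) (q : ℝ)
    (F : α → ℂ) : ℝ≥0∞ :=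
  ⨆ l : {l : ℝ // 0 < l}, ENNReal.ofReal l.1 * μ {x | l.1 < ‖F x‖} ^ (1 / q)

/-!
Write `⟨x⟩` for the Japanese bracket. By duality and the layer-cake formula for `g`, the estimate
reduces to bounding `∫_F |Ĥ| dσ` for subsets `F` of the sphere and functions `H` on `ℝⁿ` dominated
by `⟨x⟩ ^ (-γ) 1_E`. Split `H` at `⟨x⟩ = R`.

* On the inner part, upper regularity of `σ` and Schur's test bound the extension operator from
  `L²(σ)` to `L²` of a Gaussian weight of width `r`, with squared norm `≲ r`. Superposing Gaussians
  gives squared norm `≲ R ^ (1 - 2γ)` for the weight `⟨x⟩ ^ (-2γ)` truncated at `R`.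
* The outer part is at most `R ^ (-γ)`. On the segment `AD` the trivial `L¹ → L^∞` bound suffices.
  On `AB` one uses the Stein–Tomas estimate for bounded functions on sets of finite measure: in the
  `TT*` form with kernel `σ̂`, Gaussian cut-offs isolate a near part, controlled by upper
  regularity, and a far part, controlled by the decay of `σ̂`.

The value of `R` that balances the two parts gives the endpoint bound with no logarithmic loss.
For the sphere, rotation invariance makes `σ̂` a solution of Bessel's equation along rays, and
monotonicity of an energy gives its decay; averaging over a thin annulus gives the regularity.
-/

open scoped ComplexConjugate
open Complex (I)
open Module (finrank)

/-! ### Integral inequalities -/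

section Preliminaries

variable {α : Type*} [MeasurableSpace α] {μ : Measure α}

lemma enorm_sq_eq_ofReal (z : ℂ) : ‖z‖ₑ ^ 2 = ENNReal.ofReal (‖z‖ ^ 2) := by
  rw [ENNReal.ofReal_pow (norm_nonneg _), ofReal_norm]

lemma enorm_integral_ofReal {f : α → ℝ} (hf : Integrable f μ) (hf0 : 0 ≤ f) :
    ‖∫ x, (f x : ℂ) ∂μ‖ₑ = ∫⁻ x, ENNReal.ofReal (f x) ∂μ := by
  rw [integral_complex_ofReal, ← ofReal_norm, Complex.norm_real,
    Real.norm_of_nonneg (integral_nonneg hf0),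
    ofReal_integral_eq_lintegral_ofReal hf (.of_forall hf0)]

lemma sq_lintegral_mul_le {f g : α → ℝ≥0∞} (hf : AEMeasurable f μ) (hg : AEMeasurable g μ) :
    (∫⁻ x, f x * g x ∂μ) ^ 2 ≤ (∫⁻ x, f x ^ 2 ∂μ) * ∫⁻ x, g x ^ 2 ∂μ := by
  have holder := ENNReal.lintegral_mul_le_Lp_mul_Lq μ HolderConjugate.two_two hf hg
  simp only [Pi.mul_apply, ENNReal.rpow_two] at holder
  calc (∫⁻ x, f x * g x ∂μ) ^ 2
    _ ≤ ((∫⁻ x, f x ^ 2 ∂μ) ^ (1 / 2 : ℝ) * (∫⁻ x, g x ^ 2 ∂μ) ^ (1 / 2 : ℝ)) ^ 2 := by gcongr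
    _ = _ := by
      rw [mul_pow, ← ENNReal.rpow_natCast, ← ENNReal.rpow_natCast, ← ENNReal.rpow_mul,
        ← ENNReal.rpow_mul]
      norm_num

lemma setLIntegral_le_of_lintegral_sq_le {f : α → ℝ≥0∞} (hf : Measurable f) {K : ℝ≥0} {X : ℝ≥0∞}
    (hfX : ∫⁻ x, f x ^ 2 ∂μ ≤ K * X) (F : Set α) :
    ∫⁻ x in F, f x ∂μ ≤ (K ^ (1 / 2 : ℝ) : ℝ≥0) * μ F ^ (1 / 2 : ℝ) * X ^ (1 / 2 : ℝ) := by
  have hcs := sq_lintegral_mul_le (μ := μ.restrict F) (f := fun _ => 1) aemeasurable_const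
    hf.aemeasurable
  simp only [one_mul, one_pow, lintegral_one, Measure.restrict_apply_univ] at hcs
  rw [ENNReal.coe_rpow_of_nonneg _ (by norm_num), ← ENNReal.mul_rpow_of_nonneg _ _ (by norm_num),
    ← ENNReal.mul_rpow_of_nonneg _ _ (by norm_num), one_div, ENNReal.le_rpow_inv_iff two_pos,
    ENNReal.rpow_two, mul_right_comm, mul_comm]
  refine hcs.trans ?_
  gcongr
  exact (setLIntegral_le_lintegral F _).trans hfX

lemma ennreal_mul_le_sq_add_sq (a b : ℝ≥0∞) : a * b ≤ a ^ 2 + b ^ 2 := by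
  rcases le_total a b with h | h
  · calc a * b ≤ b ^ 2 := by rw [sq]; gcongr
      _ ≤ _ := le_add_self
  · calc a * b ≤ a ^ 2 := by rw [sq]; gcongr
      _ ≤ _ := le_self_add

lemma lintegral_prod_mul_kernel_le_of_schur [SFinite μ] {f : α → ℝ≥0∞} (hf : Measurable f)
    {K : α × α → ℝ≥0∞} (hK : Measurable K) {S : ℝ≥0∞}
    (hrow : ∀ᵐ x ∂μ, ∫⁻ y, K (x, y) ∂μ ≤ S) (hcol : ∀ᵐ y ∂μ, ∫⁻ x, K (x, y) ∂μ ≤ S) :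
    ∫⁻ z, f z.1 * f z.2 * K z ∂(μ.prod μ) ≤ 2 * S * ∫⁻ x, f x ^ 2 ∂μ := by
  have hfst : ∫⁻ z, f z.1 ^ 2 * K z ∂(μ.prod μ) ≤ S * ∫⁻ x, f x ^ 2 ∂μ := by
    rw [lintegral_prod _ (Measurable.aemeasurable (by fun_prop)),
      ← lintegral_const_mul _ (by fun_prop)]
    refine lintegral_mono_ae ?_
    filter_upwards [hrow] with x hx
    rw [lintegral_const_mul _ (by fun_prop), mul_comm]
    gcongr
  have hsnd : ∫⁻ z, f z.2 ^ 2 * K z ∂(μ.prod μ) ≤ S * ∫⁻ x, f x ^ 2 ∂μ := by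
    rw [lintegral_prod_symm _ (Measurable.aemeasurable (by fun_prop)),
      ← lintegral_const_mul _ (by fun_prop)]
    refine lintegral_mono_ae ?_
    filter_upwards [hcol] with y hy
    rw [lintegral_const_mul _ (by fun_prop), mul_comm]
    gcongr
  calc ∫⁻ z, f z.1 * f z.2 * K z ∂(μ.prod μ)
    _ ≤ ∫⁻ z, f z.1 ^ 2 * K z + f z.2 ^ 2 * K z ∂(μ.prod μ) := by
      refine lintegral_mono fun z => ?_
      rw [← add_mul]
      gcongr
      exact ennreal_mul_le_sq_add_sq _ _
    _ = ∫⁻ z, f z.1 ^ 2 * K z ∂(μ.prod μ) + ∫⁻ z, f z.2 ^ 2 * K z ∂(μ.prod μ) :=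
      lintegral_add_left (by fun_prop) _
    _ ≤ S * ∫⁻ x, f x ^ 2 ∂μ + S * ∫⁻ x, f x ^ 2 ∂μ := add_le_add hfst hsnd
    _ = _ := by ring

lemma integrable_conj {f : α → ℂ} (hf : Integrable f μ) :
    Integrable (fun x => conj (f x)) μ :=
  (RCLike.conjLIE (K := ℂ)).integrable_comp_iff.2 hf

lemma integrable_of_norm_le_indicator {E : Set α} (hE : MeasurableSet E) (hEfin : μ E ≠ ∞)
    {H : α → ℂ} (hH : Measurable H) {A : ℝ} (hA : ∀ x, ‖H x‖ ≤ E.indicator (fun _ => A) x) :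
    Integrable H μ :=
  ((integrable_indicator_iff hE).2 (integrableOn_const hEfin)).mono' hH.aestronglyMeasurable
    (.of_forall hA)

lemma lintegral_enorm_pow_le_of_norm_le_indicator {E : Set α} (hE : MeasurableSet E) {H : α → ℂ}
    {A : ℝ} (hA : ∀ x, ‖H x‖ ≤ E.indicator (fun _ => A) x) {m : ℕ} (hm : m ≠ 0) :
    ∫⁻ x, ‖H x‖ₑ ^ m ∂μ ≤ ENNReal.ofReal A ^ m * μ E := by
  rw [← lintegral_indicator_const hE]
  refine lintegral_mono fun x => ?_
  have hx := hA x
  by_cases hxE : x ∈ E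
  · rw [Set.indicator_of_mem hxE] at hx ⊢
    rw [← ofReal_norm]
    gcongr
  · rw [Set.indicator_of_notMem hxE] at hx ⊢
    simp [norm_le_zero_iff.1 hx, hm]

lemma integral_integral_phase_mul_swap {β : Type*} [MeasurableSpace β] {ν : Measure β} [SFinite μ]
    [SFinite ν] {φ : β → α → ℝ} (hφ : Measurable (Function.uncurry φ)) {G : α → ℂ} {K : β → ℂ}
    (hG : Integrable G μ) (hK : Integrable K ν) :
    ∫ x, (∫ z, Complex.exp (I * φ x z) * G z ∂μ) * K x ∂ν =
      ∫ z, G z * (∫ x, Complex.exp (I * φ x z) * K x ∂ν) ∂μ := by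
  have hInt : Integrable (fun w : β × α => Complex.exp (I * φ w.1 w.2) * (K w.1 * G w.2))
      (ν.prod μ) := by
    have hφ' : Measurable fun w : β × α => φ w.1 w.2 := hφ
    exact (hK.mul_prod hG).bdd_mul (c := 1) (Measurable.aestronglyMeasurable (by fun_prop))
      (.of_forall fun w => (Complex.norm_exp_I_mul_ofReal _).le)
  simp_rw [← integral_mul_const, ← integral_const_mul]
  rw [integral_integral_swap (hInt.congr (.of_forall fun w => by
    simp only [Function.uncurry]; ring))]
  simp_rw [mul_assoc, mul_left_comm]

lemma enorm_sum_choose_mul_le (k : ℕ) {T : ℕ → ℂ} {M : ℝ≥0∞} (hT : ∀ j, ‖T j‖ₑ ≤ M) :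
    ‖∑ j ∈ Finset.range k, (-1 : ℂ) ^ (j + 1) * k.choose (j + 1) * T j‖ₑ ≤ 2 ^ k * M := by
  have hchoose : ∑ j ∈ Finset.range k, k.choose (j + 1) ≤ 2 ^ k := by
    rw [← Nat.sum_range_choose, Finset.sum_range_succ']
    exact Nat.le_add_right _ _
  calc _ ≤ ∑ j ∈ Finset.range k, (k.choose (j + 1) : ℝ≥0∞) * M := by
        refine (enorm_sum_le _ _).trans (Finset.sum_le_sum fun j _ => ?_)
        rw [enorm_mul, enorm_mul, enorm_pow, enorm_neg, enorm_one, one_pow, one_mul]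
        gcongr
        · rw [← ofReal_norm, Complex.norm_natCast, ENNReal.ofReal_natCast]
        · exact hT j
    _ ≤ 2 ^ k * M := by
      rw [← Finset.sum_mul]
      gcongr
      exact_mod_cast hchoose

end Preliminaries

/-! ### The Fourier extension operator of a measure -/

section FourierExtension

variable {V : Type*} [NormedAddCommGroup V] [InnerProductSpace ℝ V] [MeasurableSpace V]

/-- The Fourier extension operator `G ↦ (G dμ)^` of a measure `μ`. Taking `μ` to be Lebesgue measure
gives the Fourier transform, up to the sign of the phase. -/
def fourierExt (μ : Measure V) (G : V → ℂ) (x : V) : ℂ :=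
  ∫ ξ, Complex.exp (I * (⟪x, ξ⟫ : ℝ)) * G ξ ∂μ

variable {μ ν : Measure V} {G K : V → ℂ}

lemma norm_fourierExt_le (μ : Measure V) (G : V → ℂ) (x : V) :
    ‖fourierExt μ G x‖ ≤ ∫ ξ, ‖G ξ‖ ∂μ := by
  refine (norm_integral_le_integral_norm _).trans_eq ?_
  simp_rw [norm_mul, Complex.norm_exp_I_mul_ofReal, one_mul]

lemma enorm_fourierExt_le (μ : Measure V) (G : V → ℂ) (x : V) :
    ‖fourierExt μ G x‖ₑ ≤ ∫⁻ ξ, ‖G ξ‖ₑ ∂μ := by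
  refine (enorm_integral_le_lintegral_enorm _).trans_eq (lintegral_congr fun ξ => ?_)
  rw [enorm_mul, ← ofReal_norm, Complex.norm_exp_I_mul_ofReal, ENNReal.ofReal_one, one_mul]

lemma fourierExt_add_arg (μ : Measure V) (G : V → ℂ) (x z : V) :
    fourierExt μ G (x + z) =
      fourierExt μ (fun ξ => Complex.exp (I * (⟪z, ξ⟫ : ℝ)) * G ξ) x := by
  simp only [fourierExt, inner_add_left, Complex.ofReal_add, mul_add, Complex.exp_add, mul_assoc]

lemma norm_sq_fourierExt (μ : Measure V) [SFinite μ] (G : V → ℂ) (x : V) :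
    ((‖fourierExt μ G x‖ ^ 2 : ℝ) : ℂ) =
      ∫ z, Complex.exp (I * (⟪x, z.1 - z.2⟫ : ℝ)) * (G z.1 * conj (G z.2)) ∂(μ.prod μ) := by
  rw [← Complex.normSq_eq_norm_sq, ← Complex.mul_conj, fourierExt, ← integral_conj,
    ← integral_prod_mul]
  refine integral_congr_ae (.of_forall fun z => ?_)
  simp only [map_mul, ← Complex.exp_conj, Complex.conj_I, Complex.conj_ofReal, inner_sub_right,
    Complex.ofReal_sub, mul_sub]
  rw [sub_eq_add_neg, Complex.exp_add, neg_mul]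
  ring

lemma fourierExt_one (μ : Measure V) (x : V) : fourierExt μ (fun _ => 1) x = charFun μ x := by
  simp_rw [fourierExt, charFun_apply, mul_one, mul_comm I, real_inner_comm]

variable [BorelSpace V]

lemma integrable_exp_inner_mul (hG : Integrable G μ) (x : V) :
    Integrable (fun ξ => Complex.exp (I * (⟪x, ξ⟫ : ℝ)) * G ξ) μ :=
  hG.bdd_mul (c := 1) (Continuous.aestronglyMeasurable (by fun_prop))
    (.of_forall fun _ => (Complex.norm_exp_I_mul_ofReal _).le)

lemma fourierExt_add (hG : Integrable G μ) (hK : Integrable K μ) (x : V) :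
    fourierExt μ (fun ξ => G ξ + K ξ) x = fourierExt μ G x + fourierExt μ K x := by
  simp only [fourierExt, mul_add]
  exact integral_add (integrable_exp_inner_mul hG x) (integrable_exp_inner_mul hK x)

lemma continuous_fourierExt (hG : Integrable G μ) : Continuous (fourierExt μ G) := by
  refine continuous_of_dominated (bound := fun ξ => ‖G ξ‖)
    (fun x => (integrable_exp_inner_mul hG x).aestronglyMeasurable)
    (fun x => .of_forall fun ξ => ?_) hG.norm (.of_forall fun ξ => by fun_prop)
  rw [norm_mul, Complex.norm_exp_I_mul_ofReal, one_mul]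

variable [SecondCountableTopology V] [SFinite μ] [SFinite ν]

lemma integral_fourierExt_mul (hG : Integrable G μ) (hK : Integrable K ν) :
    ∫ x, fourierExt μ G x * K x ∂ν = ∫ ξ, G ξ * fourierExt ν K ξ ∂μ := by
  have hφ : Measurable (Function.uncurry fun x ξ : V => (⟪x, ξ⟫ : ℝ)) :=
    Continuous.measurable (by fun_prop)
  simp only [fourierExt, integral_integral_phase_mul_swap hφ hG hK]
  simp_rw [real_inner_comm]

lemma integral_norm_sq_fourierExt_mul (hG : Integrable G μ) (hK : Integrable K ν) :
    ∫ x, ((‖fourierExt μ G x‖ ^ 2 : ℝ) : ℂ) * K x ∂ν =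
      ∫ z, (G z.1 * conj (G z.2)) * fourierExt ν K (z.1 - z.2) ∂(μ.prod μ) := by
  have hφ : Measurable (Function.uncurry fun (x : V) (z : V × V) => (⟪x, z.1 - z.2⟫ : ℝ)) :=
    Continuous.measurable (by fun_prop)
  simp_rw [norm_sq_fourierExt,
    integral_integral_phase_mul_swap hφ (hG.mul_prod (integrable_conj hG)) hK, fourierExt,
    fun (z : V × V) (x : V) => real_inner_comm x (z.1 - z.2)]

end FourierExtension

/-! ### Gaussians -/

section Gaussian

variable {V : Type*} [NormedAddCommGroup V]

/-- The centred Gaussian `x ↦ exp (-b ‖x‖²)`, used throughout as a smooth cutoff to the ball of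
radius `b ^ (-1/2)`. -/
def gaussian (b : ℝ) (x : V) : ℝ := exp (-b * ‖x‖ ^ 2)

lemma gaussian_pos (b : ℝ) (x : V) : 0 < gaussian b x := exp_pos _

lemma gaussian_le_one {b : ℝ} (hb : 0 ≤ b) (x : V) : gaussian b x ≤ 1 := by
  rw [gaussian, exp_le_one_iff, neg_mul]
  exact neg_nonpos.2 (by positivity)

lemma gaussian_neg (b : ℝ) (x : V) : gaussian b (-x) = gaussian b x := by
  rw [gaussian, norm_neg, gaussian]

lemma gaussian_sub_comm (b : ℝ) (x y : V) : gaussian b (x - y) = gaussian b (y - x) := by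
  rw [← gaussian_neg, neg_sub]

lemma gaussian_zero (x : V) : gaussian 0 x = 1 := by simp [gaussian]

lemma gaussian_pow (b : ℝ) (j : ℕ) (x : V) : gaussian b x ^ j = gaussian (j * b) x := by
  rw [gaussian, ← exp_nat_mul, gaussian]
  ring_nf

lemma gaussian_sq (b : ℝ) (x : V) : gaussian b x ^ 2 = gaussian (2 * b) x := by
  exact_mod_cast gaussian_pow b 2 x

lemma enorm_gaussian (b : ℝ) (x : V) : ‖(gaussian b x : ℂ)‖ₑ = ENNReal.ofReal (gaussian b x) := by
  rw [← ofReal_norm, Complex.norm_real, Real.norm_of_nonneg (gaussian_pos b x).le]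

@[fun_prop]
lemma continuous_gaussian (b : ℝ) : Continuous (gaussian b : V → ℝ) := by
  unfold gaussian
  fun_prop

@[fun_prop]
lemma measurable_gaussian [MeasurableSpace V] [BorelSpace V] (b : ℝ) :
    Measurable (gaussian b : V → ℝ) :=
  (continuous_gaussian b).measurable

lemma measurable_uncurry_gaussian [MeasurableSpace V] [BorelSpace V] :
    Measurable fun z : V × ℝ => gaussian z.2 z.1 := by
  unfold gaussian
  fun_prop

lemma one_sub_gaussian_pow_le {β : ℝ} {k : ℕ} (hβ : 0 ≤ β) (hβk : β ≤ 2 * k) {R : ℝ} (hR : 0 < R)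
    (x : V) : (1 - gaussian (R ^ 2)⁻¹ x) ^ k ≤ (‖x‖ / R) ^ β := by
  set v := 1 - gaussian (R ^ 2)⁻¹ x with hv
  have hv0 : 0 ≤ v := sub_nonneg.2 (gaussian_le_one (by positivity) x)
  have hv1 : v ≤ 1 := sub_le_self _ (gaussian_pos _ x).le
  have hvt : v ≤ (‖x‖ / R) ^ 2 := by
    have hexp := add_one_le_exp (-(R ^ 2)⁻¹ * ‖x‖ ^ 2)
    rw [hv, gaussian, div_pow, div_eq_inv_mul]
    linarith
  calc v ^ k = v ^ (k : ℝ) := (rpow_natCast v k).symm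
    _ ≤ v ^ (β / 2) := rpow_le_rpow_of_exponent_ge' hv0 hv1 (by positivity) (by linarith)
    _ ≤ ((‖x‖ / R) ^ 2) ^ (β / 2) := by gcongr
    _ = (‖x‖ / R) ^ β := by
      rw [← rpow_natCast, ← rpow_mul (by positivity)]
      congr 1
      push_cast
      ring

variable [InnerProductSpace ℝ V]

lemma gaussian_mul_gaussian (b : ℝ) (x y w : V) :
    gaussian (2 * b) (x - w) * gaussian (2 * b) (y - w) =
      gaussian b (x - y) * gaussian (4 * b) (w - (1 / 2 : ℝ) • (x + y)) := by
  have hsum : (x - w) + (y - w) = -((2 : ℝ) • (w - (1 / 2 : ℝ) • (x + y))) := by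
    module
  have hlaw := parallelogram_law_with_norm ℝ (x - w) (y - w)
  rw [hsum, sub_sub_sub_cancel_right, norm_neg, norm_smul, Real.norm_ofNat] at hlaw
  simp only [gaussian, ← exp_add]
  congr 1
  linear_combination b * hlaw

variable [FiniteDimensional ℝ V] [MeasurableSpace V] [BorelSpace V]

lemma integrable_gaussian {b : ℝ} (hb : 0 < b) : Integrable (gaussian b : V → ℝ) := by
  have h := (GaussianFourier.integrable_cexp_neg_mul_sq_norm_add (V := V) (b := (b : ℂ))
    (by simpa using hb) 0 0).norm
  refine h.congr (.of_forall fun x => ?_)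
  simp only [gaussian, zero_mul, add_zero, Complex.norm_exp, ← Complex.ofReal_pow,
    ← Complex.ofReal_neg, ← Complex.ofReal_mul, Complex.ofReal_re]

lemma lintegral_gaussian {b : ℝ} (hb : 0 < b) :
    ∫⁻ x : V, ENNReal.ofReal (gaussian b x) =
      ENNReal.ofReal ((π / b) ^ ((finrank ℝ V : ℝ) / 2)) := by
  rw [← GaussianFourier.integral_rexp_neg_mul_sq_norm hb]
  exact (ofReal_integral_eq_lintegral_ofReal (integrable_gaussian hb)
    (.of_forall fun x => (gaussian_pos b x).le)).symm

lemma integral_gaussian_sub {b : ℝ} (hb : 0 < b) (c : V) :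
    ∫ w : V, (gaussian b (w - c) : ℂ) = ((π / b) ^ ((finrank ℝ V : ℝ) / 2) : ℝ) := by
  rw [integral_sub_right_eq_self (fun w => (gaussian b w : ℂ)), integral_complex_ofReal]
  exact congrArg _ (GaussianFourier.integral_rexp_neg_mul_sq_norm hb)

lemma integrable_gaussian_sub_mul {α : Type*} [MeasurableSpace α] {μ : Measure α} [SFinite μ]
    {b : ℝ} (hb : 0 < b) {c : α → V} (hc : Measurable c) {G : α → ℂ} (hG : Measurable G)
    (hGi : Integrable G μ) :
    Integrable (Function.uncurry fun w z => (gaussian b (w - c z) : ℂ) * G z) (volume.prod μ) := by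
  have hm : Measurable (Function.uncurry fun w z => (gaussian b (w - c z) : ℂ) * G z) := by
    simp only [Function.uncurry_def]
    fun_prop
  have hg : Integrable fun w : V => (gaussian b w : ℂ) := (integrable_gaussian hb).ofReal
  refine (integrable_prod_iff' hm.aestronglyMeasurable).2
    ⟨.of_forall fun z => ?_, ?_⟩
  · simpa only [Function.uncurry_apply_pair] using (hg.comp_sub_right (c z)).mul_const (G z)
  · simp only [Function.uncurry_apply_pair, norm_mul, integral_mul_const]
    simp_rw [integral_sub_right_eq_self (fun w : V => ‖(gaussian b w : ℂ)‖)]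
    exact hGi.norm.const_mul _

lemma lintegral_lintegral_gaussian_sub_mul {b : ℝ} (hb : 0 < b) {f : V → ℝ≥0∞}
    (hf : Measurable f) :
    ∫⁻ w, ∫⁻ x, ENNReal.ofReal (gaussian b (x - w)) * f x =
      ENNReal.ofReal ((π / b) ^ ((finrank ℝ V : ℝ) / 2)) * ∫⁻ x, f x := by
  rw [lintegral_lintegral_swap (Measurable.aemeasurable (by fun_prop)),
    ← lintegral_const_mul _ hf]
  refine lintegral_congr fun x => ?_
  rw [lintegral_mul_const _ (by fun_prop),
    lintegral_sub_left_eq_self (fun w => ENNReal.ofReal (gaussian b w)), lintegral_gaussian hb]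

lemma fourierExt_gaussian {b : ℝ} (hb : 0 < b) (v : V) :
    fourierExt volume (fun x => (gaussian b x : ℂ)) v =
      ((π / b) ^ ((finrank ℝ V : ℝ) / 2) * gaussian (1 / (4 * b)) v : ℝ) := by
  have h := GaussianFourier.integral_cexp_neg_mul_sq_norm_add (V := V) (b := (b : ℂ))
    (by simpa using hb) I v
  rw [gaussian, Complex.ofReal_mul, Complex.ofReal_exp, Complex.ofReal_cpow (by positivity)]
  convert h using 1
  · refine integral_congr_ae (.of_forall fun x => ?_)
    simp only [gaussian, Complex.ofReal_exp, ← Complex.exp_add]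
    congr 1
    push_cast
    ring
  · push_cast
    rw [Complex.I_sq]
    congr 2
    field_simp

end Gaussian

/-! ### `L²` bounds for the extension operator and their duals -/

section ExtensionBounds

variable {V : Type*} [NormedAddCommGroup V] [InnerProductSpace ℝ V] [FiniteDimensional ℝ V]
  [MeasurableSpace V] [BorelSpace V] {σ : Measure V}

/-- Upper regularity of dimension `d - 1`, `d = dim V`, in Gaussian form: up to the constant `C`,
the measure `σ` gives a ball of radius `a ^ (-1/2)` centred on its support no more mass than a
hypersurface would. -/
def GaussianUpperRegular (σ : Measure V) (C : ℝ≥0) : Prop :=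
  ∀ a : ℝ, 0 < a → ∀ᵐ ξ ∂σ, ∫⁻ η, ENNReal.ofReal (gaussian a (ξ - η)) ∂σ ≤
    ENNReal.ofReal (C * a ^ (-((finrank ℝ V : ℝ) - 1) / 2))

/-- The extension operator of `σ` maps `L²(σ)` into `L²(w² dx)` with squared norm at most `M`. The
bound is only tested on integrable densities, for which the extension is not a junk value. -/
def ExtensionBound (σ : Measure V) (w : V → ℝ) (M : ℝ≥0∞) : Prop :=
  ∀ k : V → ℂ, Measurable k → Integrable k σ →
    ∫⁻ x, ‖(w x : ℂ) * fourierExt σ k x‖ₑ ^ 2 ≤ M * ∫⁻ ξ, ‖k ξ‖ₑ ^ 2 ∂σ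

lemma lintegral_enorm_gaussian_mul_fourierExt_sq {k : V → ℂ} {b : ℝ} (hb : 0 < b)
    (hk : Integrable k σ) :
    ∫⁻ x, ‖(gaussian b x : ℂ) * fourierExt σ k x‖ₑ ^ 2 =
      ‖∫ x : V, ((‖fourierExt σ k x‖ ^ 2 : ℝ) : ℂ) * (gaussian (2 * b) x : ℂ)‖ₑ := by
  have hInt : Integrable fun x : V => ‖fourierExt σ k x‖ ^ 2 * gaussian (2 * b) x := by
    refine (integrable_gaussian (by positivity)).bdd_mul (c := (∫ ξ, ‖k ξ‖ ∂σ) ^ 2)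
      ((continuous_fourierExt hk).norm.pow 2).aestronglyMeasurable (.of_forall fun x => ?_)
    rw [norm_pow, norm_norm]
    gcongr
    exact norm_fourierExt_le _ _ _
  simp_rw [← Complex.ofReal_mul]
  rw [enorm_integral_ofReal hInt fun x => mul_nonneg (by positivity) (gaussian_pos _ _).le]
  refine lintegral_congr fun x => ?_
  rw [enorm_sq_eq_ofReal, norm_mul, mul_pow, Complex.norm_real,
    Real.norm_of_nonneg (gaussian_pos b x).le, gaussian_sq, mul_comm]

/- The Fourier transform of the weight is again a Gaussian, so after expanding the square the bound
is a Schur test against the upper regularity of `σ` at scale `b ^ (1/2)`. -/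
lemma extensionBound_gaussian [SFinite σ] {C : ℝ≥0} (hσ : GaussianUpperRegular σ C) {b : ℝ}
    (hb : 0 < b) :
    ExtensionBound σ (gaussian b) (2 * ENNReal.ofReal
      ((π / (2 * b)) ^ ((finrank ℝ V : ℝ) / 2) *
        (C * (1 / (4 * (2 * b))) ^ (-((finrank ℝ V : ℝ) - 1) / 2)))) := by
  intro k hk hki
  set D := (π / (2 * b)) ^ ((finrank ℝ V : ℝ) / 2)
  set a := 1 / (4 * (2 * b))
  have hD : 0 ≤ D := by positivity
  have hrow : ∀ᵐ ξ ∂σ, ∫⁻ η, ENNReal.ofReal (D * gaussian a (ξ - η)) ∂σ ≤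
      ENNReal.ofReal (D * (C * a ^ (-((finrank ℝ V : ℝ) - 1) / 2))) := by
    filter_upwards [hσ a (by positivity)] with ξ hξ
    simp_rw [ENNReal.ofReal_mul hD]
    rw [lintegral_const_mul _ (by fun_prop)]
    gcongr
  have hcol : ∀ᵐ η ∂σ, ∫⁻ ξ, ENNReal.ofReal (D * gaussian a (ξ - η)) ∂σ ≤
      ENNReal.ofReal (D * (C * a ^ (-((finrank ℝ V : ℝ) - 1) / 2))) := by
    filter_upwards [hrow] with η hη
    simpa only [gaussian_sub_comm a _ η] using hη
  have hgi : Integrable fun x : V => (gaussian (2 * b) x : ℂ) :=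
    (integrable_gaussian (by positivity)).ofReal
  rw [lintegral_enorm_gaussian_mul_fourierExt_sq hb hki, integral_norm_sq_fourierExt_mul hki hgi]
  calc _ ≤ ∫⁻ z, ‖(k z.1 * conj (k z.2)) *
        fourierExt volume (fun x => (gaussian (2 * b) x : ℂ)) (z.1 - z.2)‖ₑ ∂(σ.prod σ) :=
      enorm_integral_le_lintegral_enorm _
    _ = ∫⁻ z, ‖k z.1‖ₑ * ‖k z.2‖ₑ * ENNReal.ofReal (D * gaussian a (z.1 - z.2)) ∂(σ.prod σ) := by
      refine lintegral_congr fun z => ?_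
      rw [fourierExt_gaussian (by positivity), enorm_mul, enorm_mul, RCLike.enorm_conj,
        ← ofReal_norm (Complex.ofReal _), Complex.norm_real,
        Real.norm_of_nonneg (mul_nonneg hD (gaussian_pos _ _).le)]
    _ ≤ _ := lintegral_prod_mul_kernel_le_of_schur hk.enorm (by fun_prop) hrow hcol

lemma exists_extensionBound_gaussian [SFinite σ] {C : ℝ≥0} (hσ : GaussianUpperRegular σ C) :
    ∃ C' : ℝ≥0, ∀ b : ℝ, 0 < b → ∀ z : V, ExtensionBound σ (fun x => gaussian b (x - z))
      (ENNReal.ofReal (C' * b ^ (-(1 / 2) : ℝ))) := by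
  set d : ℝ := (finrank ℝ V : ℝ)
  refine ⟨⟨2 * ((π / 2) ^ (d / 2) * (C * 8 ^ ((d - 1) / 2))), by positivity⟩,
    fun b hb z k hk hki => ?_⟩
  have hscale : 2 * ENNReal.ofReal ((π / (2 * b)) ^ (d / 2) *
      (C * (1 / (4 * (2 * b))) ^ (-(d - 1) / 2))) =
      ENNReal.ofReal (2 * ((π / 2) ^ (d / 2) * (C * 8 ^ ((d - 1) / 2))) * b ^ (-(1 / 2) : ℝ)) := by
    rw [← ENNReal.ofReal_ofNat, ← ENNReal.ofReal_mul zero_le_two]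
    congr 1
    rw [show 1 / (4 * (2 * b)) = (8 * b)⁻¹ by field_simp; norm_num, inv_rpow (by positivity),
      neg_div, rpow_neg (by positivity), inv_inv, mul_rpow (by norm_num) hb.le, ← div_div,
      div_rpow (by positivity) hb.le, show (d - 1) / 2 = d / 2 + -(1 / 2) by ring, rpow_add hb]
    field_simp
  have hmod := extensionBound_gaussian hσ hb
    (fun ξ => Complex.exp (I * (⟪z, ξ⟫ : ℝ)) * k ξ) (by fun_prop) (integrable_exp_inner_mul hki z)
  simp_rw [enorm_mul _ (k _), ← ofReal_norm (Complex.exp _), Complex.norm_exp_I_mul_ofReal,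
    ENNReal.ofReal_one, one_mul, ← fourierExt_add_arg] at hmod
  rw [hscale] at hmod
  rw [← lintegral_add_right_eq_self _ z]
  simp only [add_sub_cancel_right]
  exact hmod

/- With `k` the conjugate of `P = (w H)^`, the pairing `∫ P k dσ = ∫ H w (k dσ)^ dx` and
Cauchy–Schwarz bound `(∫ |P|² dσ)²` by `M (∫ |H|² dx) (∫ |P|² dσ)`. -/
lemma ExtensionBound.lintegral_fourierExt_sq_le [IsFiniteMeasure σ] {w : V → ℝ} {M : ℝ≥0∞}
    (hM : ExtensionBound σ w M) (hw : Measurable w) {H : V → ℂ} (hH : Measurable H)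
    (hwH : Integrable fun x => (w x : ℂ) * H x) :
    ∫⁻ ξ, ‖fourierExt volume (fun x => (w x : ℂ) * H x) ξ‖ₑ ^ 2 ∂σ ≤ M * ∫⁻ x, ‖H x‖ₑ ^ 2 := by
  set P := fourierExt volume fun x => (w x : ℂ) * H x
  have hP : Continuous P := continuous_fourierExt hwH
  have hPB : ∀ ξ, ‖P ξ‖ ≤ ∫ x, ‖(w x : ℂ) * H x‖ := norm_fourierExt_le _ _
  have hPint : Integrable P σ := .of_bound hP.aestronglyMeasurable _ (.of_forall hPB)
  have hPsq : Integrable (fun ξ => ‖P ξ‖ ^ 2) σ := by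
    refine .of_bound (C := (∫ x, ‖(w x : ℂ) * H x‖) ^ 2)
      (hP.norm.pow 2).aestronglyMeasurable (.of_forall fun ξ => ?_)
    rw [norm_pow, norm_norm]
    exact pow_le_pow_left₀ (norm_nonneg _) (hPB ξ) 2
  have hPc : Integrable (fun ξ => conj (P ξ)) σ := integrable_conj hPint
  set X := ∫⁻ ξ, ‖P ξ‖ₑ ^ 2 ∂σ
  have hXeq : X = ‖∫ ξ, P ξ * conj (P ξ) ∂σ‖ₑ := by
    simp_rw [Complex.mul_conj, Complex.normSq_eq_norm_sq]
    rw [enorm_integral_ofReal hPsq fun ξ => by positivity]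
    simp_rw [X, enorm_sq_eq_ofReal]
  have hXtop : X ≠ ∞ := by rw [hXeq]; exact enorm_ne_top
  have hXle : X ≤ ∫⁻ x, ‖H x‖ₑ * ‖(w x : ℂ) * fourierExt σ (fun ξ => conj (P ξ)) x‖ₑ := by
    rw [hXeq, integral_fourierExt_mul hwH hPc]
    refine (enorm_integral_le_lintegral_enorm _).trans_eq (lintegral_congr fun x => ?_)
    simp only [enorm_mul]
    ring
  have hXsq : X * X ≤ M * (∫⁻ x, ‖H x‖ₑ ^ 2) * X := calc
    X * X ≤ (∫⁻ x, ‖H x‖ₑ * ‖(w x : ℂ) * fourierExt σ (fun ξ => conj (P ξ)) x‖ₑ) ^ 2 := by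
        rw [← sq]; gcongr
    _ ≤ (∫⁻ x, ‖H x‖ₑ ^ 2) * ∫⁻ x, ‖(w x : ℂ) * fourierExt σ (fun ξ => conj (P ξ)) x‖ₑ ^ 2 := by
        have := (continuous_fourierExt hPc).measurable
        exact sq_lintegral_mul_le hH.enorm.aemeasurable (Measurable.aemeasurable (by fun_prop))
    _ ≤ (∫⁻ x, ‖H x‖ₑ ^ 2) * (M * ∫⁻ ξ, ‖conj (P ξ)‖ₑ ^ 2 ∂σ) := by
        gcongr
        exact hM _ (Complex.continuous_conj.comp hP).measurable hPc
    _ = _ := by simp_rw [RCLike.enorm_conj]; ring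
  rcases eq_or_ne X 0 with hX0 | hX0
  · simp [hX0]
  · exact (ENNReal.mul_le_mul_iff_left hX0 hXtop).1 hXsq

end ExtensionBounds

/-! ### The weighted `L²` estimate -/

section JapaneseBracket

variable {V : Type*} [NormedAddCommGroup V]

/-- The Japanese bracket `⟨x⟩ = (1 + ‖x‖²)^{1/2}`. -/
def japaneseBracket (x : V) : ℝ := √(1 + ‖x‖ ^ 2)

lemma one_le_japaneseBracket (x : V) : 1 ≤ japaneseBracket x :=
  one_le_sqrt.2 (by nlinarith [sq_nonneg ‖x‖])

lemma japaneseBracket_pos (x : V) : 0 < japaneseBracket x :=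
  one_pos.trans_le (one_le_japaneseBracket x)

lemma norm_le_japaneseBracket (x : V) : ‖x‖ ≤ japaneseBracket x :=
  le_sqrt_of_sq_le (by linarith)

lemma japaneseBracket_rpow_neg_le_one {γ : ℝ} (hγ : 0 ≤ γ) (x : V) :
    japaneseBracket x ^ (-γ) ≤ 1 :=
  rpow_le_one_of_one_le_of_nonpos (one_le_japaneseBracket x) (by linarith)

@[fun_prop]
lemma continuous_japaneseBracket : Continuous (japaneseBracket : V → ℝ) := by
  unfold japaneseBracket
  fun_prop

@[fun_prop]
lemma measurable_japaneseBracket [MeasurableSpace V] [BorelSpace V] :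
    Measurable (japaneseBracket : V → ℝ) :=
  continuous_japaneseBracket.measurable

/-- The weight `⟨x⟩ ^ (-γ)`, cut off to the ball `⟨x⟩ ≤ R`. -/
def truncWeight (γ R : ℝ) (x : V) : ℝ :=
  if japaneseBracket x ≤ R then japaneseBracket x ^ (-γ) else 0

lemma truncWeight_nonneg (γ R : ℝ) (x : V) : 0 ≤ truncWeight γ R x := by
  unfold truncWeight
  split_ifs
  · exact rpow_nonneg (japaneseBracket_pos x).le _
  · exact le_rfl

lemma truncWeight_le (γ R : ℝ) (x : V) : truncWeight γ R x ≤ japaneseBracket x ^ (-γ) := by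
  unfold truncWeight
  split_ifs
  · exact le_rfl
  · exact rpow_nonneg (japaneseBracket_pos x).le _

@[fun_prop]
lemma measurable_truncWeight [MeasurableSpace V] [BorelSpace V] (γ R : ℝ) :
    Measurable (truncWeight γ R : V → ℝ) :=
  Measurable.ite (measurableSet_le measurable_japaneseBracket measurable_const)
    (measurable_japaneseBracket.pow_const _) measurable_const

lemma exists_add_eq_of_le_indicator_japaneseBracket [MeasurableSpace V] [BorelSpace V] {γ R : ℝ}
    (hγ : 0 ≤ γ) (hR : 0 < R) {E : Set V} {H : V → ℂ} (hH : Measurable H)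
    (hHE : ∀ x, ‖H x‖ ≤ E.indicator (fun x => japaneseBracket x ^ (-γ)) x) :
    ∃ H₁ H₂ : V → ℂ, Measurable H₁ ∧ Measurable H₂ ∧ (fun x => H₁ x + H₂ x) = H ∧
      (∀ x, ‖H₁ x‖ ≤ E.indicator (truncWeight γ R) x) ∧
      ∀ x, ‖H₂ x‖ ≤ E.indicator (fun _ => R ^ (-γ)) x := by
  set B : Set V := {x | japaneseBracket x ≤ R}
  have hBm : MeasurableSet B := measurableSet_le (by fun_prop) measurable_const
  refine ⟨B.indicator H, Bᶜ.indicator H, hH.indicator hBm, hH.indicator hBm.compl,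
    Set.indicator_self_add_compl B H, fun x => ?_, fun x => ?_⟩
  · by_cases hx : x ∈ B
    · have hxR : japaneseBracket x ≤ R := hx
      rw [Set.indicator_of_mem hx]
      refine (hHE x).trans_eq (Set.indicator_eq_indicator Iff.rfl ?_)
      rw [truncWeight, if_pos hxR]
    · rw [Set.indicator_of_notMem hx, norm_zero]
      exact Set.indicator_nonneg (fun y _ => truncWeight_nonneg γ R y) x
  · by_cases hx : x ∈ B
    · rw [Set.indicator_of_notMem (Set.notMem_compl_iff.2 hx), norm_zero]
      exact Set.indicator_nonneg (fun _ _ => by positivity) x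
    · rw [Set.indicator_of_mem hx]
      refine (hHE x).trans (Set.indicator_le_indicator ?_)
      exact rpow_le_rpow_of_nonpos hR (not_le.1 hx).le (neg_nonpos.2 hγ)

lemma rpow_mul_exp_le_rpow_mul_gaussian {γ s : ℝ} (hγ : γ < 1) {x : V} (hs0 : 0 < s)
    (hs : s ≤ (japaneseBracket x ^ 2)⁻¹) :
    (japaneseBracket x ^ 2)⁻¹ ^ (γ - 1) * exp (-2) ≤ s ^ (γ - 1) * gaussian (2 * s) x := by
  have hsx : s * ‖x‖ ^ 2 ≤ 1 := by
    have hj := japaneseBracket_pos x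
    calc s * ‖x‖ ^ 2 ≤ (japaneseBracket x ^ 2)⁻¹ * japaneseBracket x ^ 2 := by
          gcongr
          exact norm_le_japaneseBracket x
      _ = 1 := inv_mul_cancel₀ (by positivity)
  refine mul_le_mul (rpow_le_rpow_of_nonpos hs0 hs (by linarith)) ?_ (exp_pos _).le (by positivity)
  rw [gaussian, exp_le_exp]
  linarith

/- A truncated form of `⟨x⟩ ^ (-2γ) = c ∫₀^∞ s ^ (γ - 1) exp (-s ⟨x⟩²) ds`. -/
lemma truncWeight_sq_le_lintegral_gaussian {γ R : ℝ} (hγ : γ < 1) (x : V) :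
    ENNReal.ofReal (truncWeight γ R x ^ 2) ≤ ENNReal.ofReal (2 * exp 2) *
      ∫⁻ s in Set.Ioi (2 * R ^ 2)⁻¹, ENNReal.ofReal (s ^ (γ - 1) * gaussian (2 * s) x) := by
  unfold truncWeight
  split_ifs with hR
  swap
  · simp
  have hj := japaneseBracket_pos x
  set j := japaneseBracket x
  have hsub : Set.Ioc (2 * j ^ 2)⁻¹ (j ^ 2)⁻¹ ⊆ Set.Ioi (2 * R ^ 2)⁻¹ := fun s hs =>
    lt_of_le_of_lt (by gcongr) hs.1
  calc ENNReal.ofReal ((j ^ (-γ)) ^ 2)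
    _ = ENNReal.ofReal (2 * exp 2) *
        ∫⁻ _ in Set.Ioc (2 * j ^ 2)⁻¹ (j ^ 2)⁻¹,
          ENNReal.ofReal ((j ^ 2)⁻¹ ^ (γ - 1) * exp (-2)) := by
      rw [setLIntegral_const, Real.volume_Ioc, ← ENNReal.ofReal_mul (by positivity),
        ← ENNReal.ofReal_mul (by positivity), rpow_sub_one (by positivity),
        inv_rpow (by positivity),
        ← rpow_natCast, ← rpow_mul hj.le, ← rpow_natCast, ← rpow_mul hj.le, ← rpow_neg hj.le,
        exp_neg]
      congr 1
      field_simp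
      norm_num
    _ ≤ ENNReal.ofReal (2 * exp 2) *
        ∫⁻ s in Set.Ioc (2 * j ^ 2)⁻¹ (j ^ 2)⁻¹,
          ENNReal.ofReal (s ^ (γ - 1) * gaussian (2 * s) x) := by
      gcongr 1
      refine setLIntegral_mono' measurableSet_Ioc fun s hs => ENNReal.ofReal_le_ofReal ?_
      exact rpow_mul_exp_le_rpow_mul_gaussian hγ (lt_trans (by positivity) hs.1) hs.2
    _ ≤ _ := by gcongr

lemma truncWeight_mul_rpow_mul_eq {γ R : ℝ} {E : Set V} {H : V → ℂ}
    (hH : ∀ x, ‖H x‖ ≤ E.indicator (truncWeight γ R) x) (x : V) :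
    (truncWeight γ R x : ℂ) * (((japaneseBracket x ^ γ : ℝ) : ℂ) * H x) = H x := by
  by_cases hx : japaneseBracket x ≤ R
  · rw [truncWeight, if_pos hx, ← mul_assoc, ← Complex.ofReal_mul,
      ← rpow_add (japaneseBracket_pos x), neg_add_cancel, rpow_zero, Complex.ofReal_one, one_mul]
  · have hHx : ‖H x‖ ≤ 0 :=
      (hH x).trans_eq (Set.indicator_apply_eq_zero.2 fun _ => if_neg hx)
    simp [norm_le_zero_iff.1 hHx]

end JapaneseBracket

lemma setLIntegral_Ioi_rpow_of_lt {a c : ℝ} (ha : a < -1) (hc : 0 < c) :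
    ∫⁻ s in Set.Ioi c, ENNReal.ofReal (s ^ a) = ENNReal.ofReal (-c ^ (a + 1) / (a + 1)) := by
  rw [← integral_Ioi_rpow_of_lt ha hc,
    ofReal_integral_eq_lintegral_ofReal (integrableOn_Ioi_rpow_of_lt ha hc)]
  filter_upwards [ae_restrict_mem measurableSet_Ioi] with s hs
  exact rpow_nonneg (hc.trans hs).le _

section WeightedBounds

variable {V : Type*} [NormedAddCommGroup V] [InnerProductSpace ℝ V] [FiniteDimensional ℝ V]
  [MeasurableSpace V] [BorelSpace V] {σ : Measure V}

lemma ExtensionBound.lintegral_gaussian_mul_sq {b C : ℝ}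
    (hb : ExtensionBound σ (gaussian b) (ENNReal.ofReal C)) {k : V → ℂ} (hk : Measurable k)
    (hki : Integrable k σ) :
    ∫⁻ x, ENNReal.ofReal (gaussian (2 * b) x) * ‖fourierExt σ k x‖ₑ ^ 2 ≤
      ENNReal.ofReal C * ∫⁻ ξ, ‖k ξ‖ₑ ^ 2 ∂σ := by
  refine (lintegral_congr fun x => ?_).trans_le (hb k hk hki)
  rw [enorm_mul, mul_pow, enorm_gaussian, ← ENNReal.ofReal_pow (gaussian_pos b x).le, gaussian_sq]

lemma setLIntegral_gaussian_superposition_le {γ c A : ℝ} (hγ : γ < 1 / 2)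
    (hc : 0 < c) (hA0 : 0 ≤ A) (hA : ∀ b, 0 < b → ExtensionBound σ (gaussian b)
      (ENNReal.ofReal (A * b ^ (-(1 / 2) : ℝ)))) {k : V → ℂ} (hk : Measurable k)
    (hki : Integrable k σ) :
    ∫⁻ s in Set.Ioi c, ∫⁻ x,
        ENNReal.ofReal (s ^ (γ - 1) * gaussian (2 * s) x) * ‖fourierExt σ k x‖ₑ ^ 2 ≤
      ENNReal.ofReal (A * (c ^ (γ - 1 / 2) / (1 / 2 - γ))) * ∫⁻ ξ, ‖k ξ‖ₑ ^ 2 ∂σ := by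
  have hT : Measurable (fourierExt σ k) := (continuous_fourierExt hki).measurable
  calc ∫⁻ s in Set.Ioi c, ∫⁻ x,
        ENNReal.ofReal (s ^ (γ - 1) * gaussian (2 * s) x) * ‖fourierExt σ k x‖ₑ ^ 2
    _ ≤ ∫⁻ s in Set.Ioi c,
          ENNReal.ofReal (s ^ (γ - 3 / 2)) * (ENNReal.ofReal A * ∫⁻ ξ, ‖k ξ‖ₑ ^ 2 ∂σ) := by
      refine setLIntegral_mono' measurableSet_Ioi fun s hs => ?_
      have hs0 : 0 < s := hc.trans hs
      have hexp : s ^ (γ - 3 / 2) * A = s ^ (γ - 1) * (A * s ^ (-(1 / 2) : ℝ)) := by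
        rw [show γ - 3 / 2 = γ - 1 + -(1 / 2) by ring, rpow_add hs0]
        ring
      rw [← mul_assoc, ← ENNReal.ofReal_mul (by positivity), hexp]
      simp_rw [ENNReal.ofReal_mul (rpow_nonneg hs0.le (γ - 1)), mul_assoc]
      rw [lintegral_const_mul _ (by fun_prop)]
      gcongr
      exact (hA s hs0).lintegral_gaussian_mul_sq hk hki
    _ = _ := by
      rw [lintegral_mul_const _ (by fun_prop), setLIntegral_Ioi_rpow_of_lt (by linarith) hc,
        ← mul_assoc, ← ENNReal.ofReal_mul' hA0]
      congr 2
      rw [show γ - 3 / 2 + 1 = -(1 / 2 - γ) by ring, neg_div_neg_eq, mul_comm, neg_sub]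

lemma exists_extensionBound_truncWeight [SFinite σ] {C : ℝ≥0} (hσ : GaussianUpperRegular σ C)
    {γ : ℝ} (hγ : γ < 1 / 2) :
    ∃ C' : ℝ≥0, ∀ R : ℝ, 0 < R →
      ExtensionBound σ (truncWeight γ R) (ENNReal.ofReal (C' * R ^ (1 - 2 * γ))) := by
  obtain ⟨A, hA⟩ := exists_extensionBound_gaussian hσ
  have : 0 < 1 / 2 - γ := by linarith
  refine ⟨⟨2 * exp 2 * (A * (2 ^ (1 / 2 - γ) / (1 / 2 - γ))), by positivity⟩,
    fun R hR k hk hki => ?_⟩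
  have hT : Measurable (fourierExt σ k) := (continuous_fourierExt hki).measurable
  have hgm : Measurable fun z : V × ℝ => gaussian (2 * z.2) z.1 :=
    measurable_uncurry_gaussian.comp (measurable_fst.prodMk (measurable_snd.const_mul 2))
  have hm : Measurable fun z : V × ℝ =>
      ENNReal.ofReal (z.2 ^ (γ - 1) * gaussian (2 * z.2) z.1) * ‖fourierExt σ k z.1‖ₑ ^ 2 := by
    fun_prop
  set c := (2 * R ^ 2)⁻¹ with hcdef
  have hpow : c ^ (γ - 1 / 2) = 2 ^ (1 / 2 - γ) * R ^ (1 - 2 * γ) := by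
    rw [hcdef, inv_rpow (by positivity), ← rpow_neg (by positivity), neg_sub,
      mul_rpow zero_le_two (by positivity), ← rpow_natCast, ← rpow_mul hR.le]
    ring_nf
  calc ∫⁻ x, ‖(truncWeight γ R x : ℂ) * fourierExt σ k x‖ₑ ^ 2
    _ = ∫⁻ x, ENNReal.ofReal (truncWeight γ R x ^ 2) * ‖fourierExt σ k x‖ₑ ^ 2 := by
      refine lintegral_congr fun x => ?_
      rw [enorm_mul, mul_pow, enorm_sq_eq_ofReal, Complex.norm_real, Real.norm_eq_abs, sq_abs]
    _ ≤ ∫⁻ x, ENNReal.ofReal (2 * exp 2) * ∫⁻ s in Set.Ioi c,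
          ENNReal.ofReal (s ^ (γ - 1) * gaussian (2 * s) x) * ‖fourierExt σ k x‖ₑ ^ 2 := by
      refine lintegral_mono fun x => ?_
      rw [lintegral_mul_const' _ _ (by finiteness), ← mul_assoc]
      gcongr
      exact truncWeight_sq_le_lintegral_gaussian (by linarith) x
    _ = ENNReal.ofReal (2 * exp 2) * ∫⁻ s in Set.Ioi c, ∫⁻ x,
          ENNReal.ofReal (s ^ (γ - 1) * gaussian (2 * s) x) * ‖fourierExt σ k x‖ₑ ^ 2 := by
      rw [lintegral_const_mul _ hm.lintegral_prod_right', lintegral_lintegral_swap hm.aemeasurable]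
    _ ≤ ENNReal.ofReal (2 * exp 2) * (ENNReal.ofReal (A * (c ^ (γ - 1 / 2) / (1 / 2 - γ))) *
          ∫⁻ ξ, ‖k ξ‖ₑ ^ 2 ∂σ) := by
      gcongr
      exact setLIntegral_gaussian_superposition_le hγ (by positivity) A.coe_nonneg
        (fun b hb => by simpa only [sub_zero] using hA b hb 0) hk hki
    _ = ENNReal.ofReal (2 * exp 2 * (A * (2 ^ (1 / 2 - γ) / (1 / 2 - γ))) * R ^ (1 - 2 * γ)) *
          ∫⁻ ξ, ‖k ξ‖ₑ ^ 2 ∂σ := by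
      rw [hpow, ← mul_assoc, ← ENNReal.ofReal_mul (by positivity)]
      ring_nf

lemma exists_lintegral_fourierExt_sq_le_of_le_truncWeight [IsFiniteMeasure σ] {C : ℝ≥0}
    (hσ : GaussianUpperRegular σ C) {γ : ℝ} (hγ0 : 0 ≤ γ) (hγ : γ < 1 / 2) :
    ∃ C' : ℝ≥0, ∀ R : ℝ, 0 < R → ∀ E : Set V, MeasurableSet E → volume E ≠ ∞ →
      ∀ H : V → ℂ, Measurable H → (∀ x, ‖H x‖ ≤ E.indicator (truncWeight γ R) x) →
        ∫⁻ ξ, ‖fourierExt volume H ξ‖ₑ ^ 2 ∂σ ≤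
          ENNReal.ofReal (C' * R ^ (1 - 2 * γ)) * volume E := by
  obtain ⟨C', hC'⟩ := exists_extensionBound_truncWeight hσ hγ
  refine ⟨C', fun R hR E hE hEfin H hH hHE => ?_⟩
  set H₁ : V → ℂ := fun x => ((japaneseBracket x ^ γ : ℝ) : ℂ) * H x
  have hfactor : (fun x => (truncWeight γ R x : ℂ) * H₁ x) = H :=
    funext (truncWeight_mul_rpow_mul_eq hHE)
  have hH₁ : ∀ x, ‖H₁ x‖ ≤ E.indicator (fun _ => 1) x := fun x => by
    have hj := japaneseBracket_pos x
    calc ‖H₁ x‖ ≤ japaneseBracket x ^ γ * E.indicator (truncWeight γ R) x := by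
          rw [norm_mul, Complex.norm_real, norm_of_nonneg (rpow_nonneg hj.le γ)]
          gcongr
          exact hHE x
      _ ≤ japaneseBracket x ^ γ * E.indicator (fun x => japaneseBracket x ^ (-γ)) x := by
          gcongr
          exact truncWeight_le γ R x
      _ = E.indicator (fun _ => 1) x := by
          by_cases hx : x ∈ E
          · simp [hx, ← rpow_add hj]
          · simp [hx]
  have hInt : Integrable H := by
    refine integrable_of_norm_le_indicator hE hEfin hH (A := 1) fun x => (hHE x).trans ?_
    exact Set.indicator_le_indicator
      (by exact (truncWeight_le γ R x).trans (japaneseBracket_rpow_neg_le_one hγ0 x))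
  have hdual := (hC' R hR).lintegral_fourierExt_sq_le (measurable_truncWeight γ R)
    (H := H₁) (by fun_prop) (by rwa [hfactor])
  rw [hfactor] at hdual
  refine hdual.trans ?_
  gcongr
  simpa using lintegral_enorm_pow_le_of_norm_le_indicator hE hH₁ two_ne_zero

end WeightedBounds

/-! ### Quadratic forms with convolution kernel -/

section ConvolutionForm

variable {V : Type*} [NormedAddCommGroup V] [InnerProductSpace ℝ V] [FiniteDimensional ℝ V]
  [MeasurableSpace V] [BorelSpace V] {H K : V → ℂ}

/-- The Hermitian form `⟨H, K ∗ H⟩` with convolution kernel `K`. -/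
def convForm (K H : V → ℂ) : ℂ := ∫ z : V × V, H z.1 * conj (H z.2) * K (z.1 - z.2)

lemma integrable_convForm (hH : Integrable H) (hK : Continuous K) {B : ℝ} (hB : ∀ x, ‖K x‖ ≤ B) :
    Integrable fun z : V × V => H z.1 * conj (H z.2) * K (z.1 - z.2) :=
  (hH.mul_prod (integrable_conj hH)).mul_bdd (c := B)
    (Continuous.aestronglyMeasurable (by fun_prop)) (.of_forall fun _ => hB _)

lemma convForm_sum {ι : Type*} (s : Finset ι) (c : ι → ℂ) {K : ι → V → ℂ} (hH : Integrable H)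
    (hK : ∀ i, Continuous (K i)) {B : ℝ} (hB : ∀ i x, ‖K i x‖ ≤ B) :
    convForm (fun x => ∑ i ∈ s, c i * K i x) H = ∑ i ∈ s, c i * convForm (K i) H := by
  simp_rw [convForm, ← integral_const_mul, Finset.mul_sum]
  rw [integral_finsetSum]
  · simp_rw [mul_left_comm]
  · intro i _
    simp_rw [mul_left_comm]
    exact (integrable_convForm hH (hK i) (hB i)).const_mul _

lemma enorm_convForm_le (hH : Measurable H) {B : ℝ≥0∞} (hB : ∀ x, ‖K x‖ₑ ≤ B) :
    ‖convForm K H‖ₑ ≤ B * (∫⁻ x, ‖H x‖ₑ) ^ 2 := by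
  calc ‖convForm K H‖ₑ ≤ ∫⁻ z : V × V, ‖H z.1‖ₑ * ‖H z.2‖ₑ * ‖K (z.1 - z.2)‖ₑ := by
        refine (enorm_integral_le_lintegral_enorm _).trans_eq (lintegral_congr fun z => ?_)
        rw [enorm_mul, enorm_mul, RCLike.enorm_conj]
    _ ≤ ∫⁻ z : V × V, ‖H z.1‖ₑ * ‖H z.2‖ₑ * B := by gcongr; exact hB _
    _ = _ := by
        rw [lintegral_mul_const _ (by fun_prop), Measure.volume_eq_prod,
          lintegral_prod_mul hH.enorm.aemeasurable hH.enorm.aemeasurable, sq, mul_comm]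

variable {σ : Measure V} [IsFiniteMeasure σ]

lemma lintegral_enorm_fourierExt_sq_eq_convForm (hH : Integrable H) :
    ∫⁻ ξ, ‖fourierExt volume H ξ‖ₑ ^ 2 ∂σ = ‖convForm (charFun σ) H‖ₑ := by
  have hInt : Integrable (fun ξ => ‖fourierExt volume H ξ‖ ^ 2) σ := by
    refine .of_bound (C := (∫ x, ‖H x‖) ^ 2)
      ((continuous_fourierExt hH).norm.pow 2).aestronglyMeasurable (.of_forall fun ξ => ?_)
    rw [norm_pow, norm_norm]
    exact pow_le_pow_left₀ (norm_nonneg _) (norm_fourierExt_le _ _ _) 2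
  have hsq := integral_norm_sq_fourierExt_mul hH (integrable_const (μ := σ) (1 : ℂ))
  simp_rw [mul_one, fourierExt_one] at hsq
  rw [convForm, Measure.volume_eq_prod, ← hsq, enorm_integral_ofReal hInt fun ξ => by positivity]
  simp_rw [enorm_sq_eq_ofReal]

end ConvolutionForm

/-! ### Fourier decay -/

section FourierDecay

variable {V : Type*} [NormedAddCommGroup V] [InnerProductSpace ℝ V] [MeasurableSpace V]
  {σ : Measure V}

/-- The Fourier transform of `σ` decays to order `β`, with constant `C`. -/
def FourierDecay (σ : Measure V) (β : ℝ) (C : ℝ≥0) : Prop :=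
  ∀ x, ‖x‖ ^ β * ‖charFun σ x‖ ≤ C

lemma FourierDecay.enorm_one_sub_gaussian_pow_mul_charFun_le {β : ℝ} {C : ℝ≥0}
    (hσ : FourierDecay σ β C) {k : ℕ} (hβ : 0 ≤ β) (hβk : β ≤ 2 * k) {R : ℝ} (hR : 0 < R) (x : V) :
    ‖(1 - (gaussian (R ^ 2)⁻¹ x : ℂ)) ^ k * charFun σ x‖ₑ ≤ ENNReal.ofReal (C * R ^ (-β)) := by
  rw [← ofReal_norm]
  refine ENNReal.ofReal_le_ofReal ?_
  rw [norm_mul, norm_pow, ← Complex.ofReal_one, ← Complex.ofReal_sub, Complex.norm_real,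
    norm_of_nonneg (sub_nonneg.2 (gaussian_le_one (by positivity) x))]
  calc (1 - gaussian (R ^ 2)⁻¹ x) ^ k * ‖charFun σ x‖
    _ ≤ (‖x‖ / R) ^ β * ‖charFun σ x‖ := by gcongr; exact one_sub_gaussian_pow_le hβ hβk hR x
    _ = ‖x‖ ^ β * ‖charFun σ x‖ * R ^ (-β) := by
      rw [div_rpow (norm_nonneg x) hR.le, rpow_neg hR.le]
      ring
    _ ≤ C * R ^ (-β) := by gcongr; exact hσ x

end FourierDecay

/-! ### The Stein–Tomas estimate for bounded functions with support of finite measure -/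

section SteinTomas

variable {V : Type*} [NormedAddCommGroup V] [InnerProductSpace ℝ V] [FiniteDimensional ℝ V]
  [MeasurableSpace V] [BorelSpace V] {σ : Measure V}

/- Superposing over `w` the products of Gaussians centred at `w` restores a convolution kernel. -/
lemma integral_convForm_gaussian_mul {H K : V → ℂ} (hHm : Measurable H) (hH : Integrable H)
    (hK : Continuous K) {B : ℝ} (hB : ∀ x, ‖K x‖ ≤ B) {b : ℝ} (hb : 0 < b) :
    ∫ w, convForm K (fun x => (gaussian (2 * b) (x - w) : ℂ) * H x) =
      ((π / (4 * b)) ^ ((finrank ℝ V : ℝ) / 2) : ℝ) *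
        convForm (fun x => (gaussian b x : ℂ) * K x) H := by
  set G : V × V → ℂ := fun z =>
    H z.1 * conj (H z.2) * ((gaussian b (z.1 - z.2) : ℂ) * K (z.1 - z.2)) with hGdef
  have hG : Integrable G := by
    refine integrable_convForm (K := fun x => (gaussian b x : ℂ) * K x) hH (by fun_prop) (B := B)
      fun x => ?_
    rw [norm_mul, Complex.norm_real, norm_of_nonneg (gaussian_pos b x).le]
    exact (mul_le_of_le_one_left (norm_nonneg _) (gaussian_le_one hb.le x)).trans (hB x)
  have hInt : Integrable (Function.uncurry fun (w : V) (z : V × V) =>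
      (gaussian (4 * b) (w - (1 / 2 : ℝ) • (z.1 + z.2)) : ℂ) * G z) := by
    refine integrable_gaussian_sub_mul (by positivity) (by fun_prop) ?_ hG
    have := hK.measurable
    fun_prop
  calc ∫ w, convForm K (fun x => (gaussian (2 * b) (x - w) : ℂ) * H x)
    _ = ∫ w, ∫ z : V × V, (gaussian (4 * b) (w - (1 / 2 : ℝ) • (z.1 + z.2)) : ℂ) * G z := by
      refine integral_congr_ae (.of_forall fun w => integral_congr_ae (.of_forall fun z => ?_))
      have hprod := congrArg Complex.ofReal (gaussian_mul_gaussian b z.1 z.2 w)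
      simp only [Complex.ofReal_mul] at hprod
      simp only [map_mul, Complex.conj_ofReal, G]
      linear_combination (H z.1 * conj (H z.2) * K (z.1 - z.2)) * hprod
    _ = ∫ z, ∫ w, (gaussian (4 * b) (w - (1 / 2 : ℝ) • (z.1 + z.2)) : ℂ) * G z := by
      rw [integral_integral_swap hInt]
    _ = _ := by
      simp_rw [integral_mul_const, integral_gaussian_sub (by positivity : 0 < 4 * b),
        integral_const_mul, convForm, hGdef]

lemma enorm_convForm_charFun_gaussian_mul_le [IsFiniteMeasure σ] {b : ℝ} (hb : 0 < b)
    {M : ℝ≥0∞} {w : V} (hM : ExtensionBound σ (fun x => gaussian b (x - w)) M) {H : V → ℂ}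
    (hHm : Measurable H) (hH : Integrable H) :
    ‖convForm (charFun σ) (fun x => (gaussian (2 * b) (x - w) : ℂ) * H x)‖ₑ ≤
      M * ∫⁻ x, ENNReal.ofReal (gaussian (2 * b) (x - w)) * ‖H x‖ₑ ^ 2 := by
  have hgH : Integrable fun x => (gaussian (2 * b) (x - w) : ℂ) * H x := by
    refine hH.bdd_mul (c := 1) (Continuous.aestronglyMeasurable (by fun_prop))
      (.of_forall fun x => ?_)
    rw [Complex.norm_real, norm_of_nonneg (gaussian_pos _ _).le]
    exact gaussian_le_one (by positivity) _
  have hsplit : (fun x => (gaussian (2 * b) (x - w) : ℂ) * H x) =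
      fun x => (gaussian b (x - w) : ℂ) * ((gaussian b (x - w) : ℂ) * H x) := by
    ext x
    rw [← gaussian_sq]
    push_cast
    ring
  rw [← lintegral_enorm_fourierExt_sq_eq_convForm hgH, hsplit]
  refine (hM.lintegral_fourierExt_sq_le (by fun_prop) (by fun_prop) (hsplit ▸ hgH)).trans_eq ?_
  congr 1
  refine lintegral_congr fun x => ?_
  rw [enorm_mul, mul_pow, enorm_gaussian, ← ENNReal.ofReal_pow (gaussian_pos b _).le, gaussian_sq]

lemma exists_enorm_convForm_gaussian_mul_charFun_le [IsFiniteMeasure σ] {C : ℝ≥0}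
    (hσ : GaussianUpperRegular σ C) :
    ∃ C' : ℝ≥0, ∀ b : ℝ, 0 < b → ∀ H : V → ℂ, Measurable H → Integrable H →
      ‖convForm (fun x => (gaussian b x : ℂ) * charFun σ x) H‖ₑ ≤
        ENNReal.ofReal (C' * b ^ (-(1 / 2) : ℝ)) * ∫⁻ x, ‖H x‖ₑ ^ 2 := by
  obtain ⟨A, hA⟩ := exists_extensionBound_gaussian hσ
  set d : ℝ := (finrank ℝ V : ℝ)
  refine ⟨⟨2 ^ (d / 2) * A, by positivity⟩, fun b hb H hHm hH => ?_⟩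
  set D := (π / (4 * b)) ^ (d / 2) with hDdef
  have hD : 0 < D := by positivity
  have hDtwo : (π / (2 * b)) ^ (d / 2) = D * 2 ^ (d / 2) := by
    rw [hDdef, ← mul_rpow (by positivity) zero_le_two]
    congr 1
    field_simp
    norm_num
  refine (ENNReal.mul_le_mul_iff_right (a := ENNReal.ofReal D)
    (by simpa using hD) ENNReal.ofReal_ne_top).1 ?_
  calc ENNReal.ofReal D * ‖convForm (fun x => (gaussian b x : ℂ) * charFun σ x) H‖ₑ
    _ = ‖∫ w, convForm (charFun σ) (fun x => (gaussian (2 * b) (x - w) : ℂ) * H x)‖ₑ := by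
      rw [integral_convForm_gaussian_mul hHm hH continuous_charFun norm_charFun_le hb, enorm_mul,
        ← ofReal_norm (Complex.ofReal _), Complex.norm_real, norm_of_nonneg hD.le]
    _ ≤ ∫⁻ w, ENNReal.ofReal (A * b ^ (-(1 / 2) : ℝ)) *
          ∫⁻ x, ENNReal.ofReal (gaussian (2 * b) (x - w)) * ‖H x‖ₑ ^ 2 :=
      (enorm_integral_le_lintegral_enorm _).trans (lintegral_mono fun w =>
        enorm_convForm_charFun_gaussian_mul_le hb (hA b hb w) hHm hH)
    _ = ENNReal.ofReal (A * b ^ (-(1 / 2) : ℝ)) *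
          (ENNReal.ofReal ((π / (2 * b)) ^ (d / 2)) * ∫⁻ x, ‖H x‖ₑ ^ 2) := by
      rw [lintegral_const_mul' _ _ ENNReal.ofReal_ne_top,
        lintegral_lintegral_gaussian_sub_mul (by positivity) (by fun_prop)]
    _ = ENNReal.ofReal D *
          (ENNReal.ofReal (2 ^ (d / 2) * A * b ^ (-(1 / 2) : ℝ)) * ∫⁻ x, ‖H x‖ₑ ^ 2) := by
      rw [← mul_assoc, ← mul_assoc, ← ENNReal.ofReal_mul (by positivity),
        ← ENNReal.ofReal_mul hD.le, hDtwo]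
      ring_nf

lemma convForm_one_sub_gaussian_pow_mul {H K : V → ℂ} (hH : Integrable H) (hK : Continuous K)
    {B : ℝ} (hB : ∀ x, ‖K x‖ ≤ B) {b : ℝ} (hb : 0 ≤ b) (k : ℕ) :
    convForm (fun x => (1 - (gaussian b x : ℂ)) ^ k * K x) H =
      ∑ j ∈ Finset.range (k + 1), (-1 : ℂ) ^ j * k.choose j *
        convForm (fun x => (gaussian (j * b) x : ℂ) * K x) H := by
  rw [← convForm_sum _ _ hH (fun j => by fun_prop) (B := B) fun j x => ?_]
  · congr! 2 with x
    rw [sub_eq_neg_add, add_pow, Finset.sum_mul]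
    refine Finset.sum_congr rfl fun j _ => ?_
    rw [one_pow, mul_one, neg_pow, ← Complex.ofReal_pow, gaussian_pow]
    ring
  · rw [norm_mul, Complex.norm_real, norm_of_nonneg (gaussian_pos _ x).le]
    exact (mul_le_of_le_one_left (norm_nonneg _) (gaussian_le_one (by positivity) x)).trans (hB x)

/- Write `1 = (1 - u) ^ k + (1 - (1 - u) ^ k)` with `u` a Gaussian at scale `R`. The first term
localises the kernel `charFun σ` to `‖x‖ ≥ R`, where it decays; the second is a combination of the
Gaussians `u, …, u ^ k`. -/
lemma exists_lintegral_fourierExt_sq_le_scale [IsFiniteMeasure σ] {C C₀ : ℝ≥0} {β : ℝ}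
    (hβ : 0 ≤ β) (hσ : GaussianUpperRegular σ C) (hdecay : FourierDecay σ β C₀) :
    ∃ C' : ℝ≥0, ∀ R : ℝ, 0 < R → ∀ H : V → ℂ, Measurable H → Integrable H →
      ∫⁻ ξ, ‖fourierExt volume H ξ‖ₑ ^ 2 ∂σ ≤
        ENNReal.ofReal (C' * R) * (∫⁻ x, ‖H x‖ₑ ^ 2) +
          ENNReal.ofReal (C₀ * R ^ (-β)) * (∫⁻ x, ‖H x‖ₑ) ^ 2 := by
  obtain ⟨A, hA⟩ := exists_enorm_convForm_gaussian_mul_charFun_le hσ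
  obtain ⟨k, hk⟩ := exists_nat_ge β
  refine ⟨2 ^ k * A, fun R hR H hHm hH => ?_⟩
  have hgauss : ∀ j : ℕ,
      ‖convForm (fun x => (gaussian ((j + 1 : ℕ) * (R ^ 2)⁻¹) x : ℂ) * charFun σ x) H‖ₑ ≤
        ENNReal.ofReal (A * R) * ∫⁻ x, ‖H x‖ₑ ^ 2 := by
    intro j
    refine (hA _ (by positivity) H hHm hH).trans ?_
    gcongr
    calc (((j + 1 : ℕ) : ℝ) * (R ^ 2)⁻¹) ^ (-(1 / 2) : ℝ)
      _ ≤ ((R ^ 2)⁻¹) ^ (-(1 / 2) : ℝ) :=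
        rpow_le_rpow_of_nonpos (by positivity)
          (le_mul_of_one_le_left (by positivity) (by norm_cast; omega)) (by norm_num)
      _ = R := by
        rw [← rpow_natCast, ← rpow_neg hR.le, ← rpow_mul hR.le]
        norm_num
  have hexpand := convForm_one_sub_gaussian_pow_mul hH continuous_charFun
    (norm_charFun_le (μ := σ)) (b := (R ^ 2)⁻¹) (by positivity) k
  rw [Finset.sum_range_succ'] at hexpand
  simp only [Nat.cast_zero, zero_mul, gaussian_zero, Complex.ofReal_one, one_mul, pow_zero,
    Nat.choose_zero_right, Nat.cast_one] at hexpand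
  rw [lintegral_enorm_fourierExt_sq_eq_convForm hH, ← sub_eq_of_eq_add' hexpand]
  refine enorm_sub_le.trans ?_
  rw [add_comm]
  gcongr
  · refine (enorm_sum_choose_mul_le k hgauss).trans_eq ?_
    rw [← mul_assoc, NNReal.coe_mul, mul_assoc _ (A : ℝ), ENNReal.ofReal_mul (by positivity)]
    simp
  · exact enorm_convForm_le hHm fun x =>
      hdecay.enorm_one_sub_gaussian_pow_mul_charFun_le hβ (by linarith) hR x

lemma rpow_one_div_one_add_rpow_neg_mul_sq {β e : ℝ} (hβ : 0 ≤ β) (he : 0 < e) :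
    (e ^ (1 / (1 + β))) ^ (-β) * e ^ 2 = e ^ (1 + 1 / (1 + β)) := by
  have hβ' : 1 + β ≠ 0 := by positivity
  rw [← rpow_natCast, ← rpow_mul he.le, ← rpow_add he]
  congr 1
  push_cast
  field_simp
  ring

lemma exists_lintegral_fourierExt_sq_le_of_le_indicator [IsFiniteMeasure σ] {C C₀ : ℝ≥0} {β : ℝ}
    (hβ : 0 ≤ β) (hσ : GaussianUpperRegular σ C) (hdecay : FourierDecay σ β C₀) :
    ∃ C' : ℝ≥0, ∀ E : Set V, MeasurableSet E → volume E ≠ ∞ → ∀ H : V → ℂ, Measurable H →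
      ∀ A : ℝ, 0 ≤ A → (∀ x, ‖H x‖ ≤ E.indicator (fun _ => A) x) →
      ∫⁻ ξ, ‖fourierExt volume H ξ‖ₑ ^ 2 ∂σ ≤
        ENNReal.ofReal (C' * A ^ 2 * volume.real E ^ (1 + 1 / (1 + β))) := by
  obtain ⟨C', hC'⟩ := exists_lintegral_fourierExt_sq_le_scale hβ hσ hdecay
  refine ⟨C' + C₀, fun E hE hEfin H hH A hA hHA => ?_⟩
  have hHint : Integrable H := integrable_of_norm_le_indicator hE hEfin hH hHA
  have hpow : ∀ m : ℕ, m ≠ 0 →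
      ∫⁻ x, ‖H x‖ₑ ^ m ≤ ENNReal.ofReal (A ^ m * volume.real E) := by
    intro m hm
    refine (lintegral_enorm_pow_le_of_norm_le_indicator hE hHA hm).trans_eq ?_
    rw [ENNReal.ofReal_mul (by positivity), ENNReal.ofReal_pow hA, ofReal_measureReal hEfin]
  set e := volume.real E
  rcases eq_or_lt_of_le (by positivity : 0 ≤ e) with he0 | hepos
  · have hzero : ∀ m : ℕ, m ≠ 0 → ∫⁻ x, ‖H x‖ₑ ^ m = 0 := fun m hm =>
      le_zero_iff.1 ((hpow m hm).trans_eq (by rw [← he0, mul_zero, ENNReal.ofReal_zero]))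
    have hone : ∫⁻ x, ‖H x‖ₑ = 0 := by simpa using hzero 1 one_ne_zero
    exact (hC' 1 one_pos H hH hHint).trans (by simp [hone, hzero])
  · set R := e ^ (1 / (1 + β))
    have hR : 0 < R := rpow_pos_of_pos hepos _
    calc _ ≤ _ := hC' R hR H hH hHint
      _ ≤ ENNReal.ofReal (C' * R) * ENNReal.ofReal (A ^ 2 * e) +
          ENNReal.ofReal (C₀ * R ^ (-β)) * ENNReal.ofReal (A * e) ^ 2 := by
        gcongr
        · exact hpow 2 two_ne_zero
        · simpa only [pow_one] using hpow 1 one_ne_zero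
      _ = ENNReal.ofReal ((C' + C₀ : ℝ≥0) * A ^ 2 * e ^ (1 + 1 / (1 + β))) := by
        rw [← ENNReal.ofReal_pow (by positivity), ← ENNReal.ofReal_mul (by positivity),
          ← ENNReal.ofReal_mul (by positivity),
          ← ENNReal.ofReal_add (by positivity) (by positivity)]
        congr 1
        have hRe : R * e = e ^ (1 + 1 / (1 + β)) := by
          rw [rpow_add hepos, rpow_one, mul_comm]
        have hRβ : R ^ (-β) * e ^ 2 = e ^ (1 + 1 / (1 + β)) :=
          rpow_one_div_one_add_rpow_neg_mul_sq hβ hepos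
        push_cast
        linear_combination (C' * A ^ 2) * hRe + (C₀ * A ^ 2) * hRβ

end SteinTomas

/-! ### Restricted dual estimates -/

section RestrictedDual

variable {V : Type*} [NormedAddCommGroup V] [InnerProductSpace ℝ V] [FiniteDimensional ℝ V]
  [MeasurableSpace V] [BorelSpace V] {σ : Measure V} {γ : ℝ}

/-- The restricted strong-type bound, with weight `⟨x⟩ ^ (-γ)`, for the dual of the extension
operator of `σ`: it is tested on the set `F` on the side of `σ` and on functions dominated by the
weight on the set `E` on the other side. -/
def RestrictedDualBound (σ : Measure V) (γ s t : ℝ) (C : ℝ≥0) : Prop :=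
  ∀ F E : Set V, MeasurableSet E → volume E ≠ ∞ → ∀ H : V → ℂ, Measurable H →
    (∀ x, ‖H x‖ ≤ E.indicator (fun x => japaneseBracket x ^ (-γ)) x) →
    ∫⁻ ξ in F, ‖fourierExt volume H ξ‖ₑ ∂σ ≤ C * σ F ^ s * volume E ^ t

lemma setLIntegral_enorm_fourierExt_add_le (F : Set V) {H₁ H₂ : V → ℂ} (h₁ : Integrable H₁)
    (h₂ : Integrable H₂) :
    ∫⁻ ξ in F, ‖fourierExt volume (fun x => H₁ x + H₂ x) ξ‖ₑ ∂σ ≤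
      ∫⁻ ξ in F, ‖fourierExt volume H₁ ξ‖ₑ ∂σ + ∫⁻ ξ in F, ‖fourierExt volume H₂ ξ‖ₑ ∂σ := by
  rw [← lintegral_add_left (continuous_fourierExt h₁).measurable.enorm]
  refine lintegral_mono fun ξ => ?_
  rw [fourierExt_add h₁ h₂]
  exact enorm_add_le _ _

lemma restrictedDualBound_of_split [IsFiniteMeasure σ] (hγ : 0 ≤ γ) {s t : ℝ} {C₁ C₂ : ℝ≥0}
    (hsplit : ∀ F E : Set V, MeasurableSet E → σ F ≠ 0 → volume E ≠ 0 → volume E ≠ ∞ →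
      ∃ R : ℝ, 0 < R ∧
        (∀ H : V → ℂ, Measurable H → Integrable H → (∀ x, ‖H x‖ ≤ E.indicator (truncWeight γ R) x) →
          ∫⁻ ξ in F, ‖fourierExt volume H ξ‖ₑ ∂σ ≤ C₁ * σ F ^ s * volume E ^ t) ∧
        ∀ H : V → ℂ, Measurable H → (∀ x, ‖H x‖ ≤ E.indicator (fun _ => R ^ (-γ)) x) →
          ∫⁻ ξ in F, ‖fourierExt volume H ξ‖ₑ ∂σ ≤ C₂ * σ F ^ s * volume E ^ t) :
    RestrictedDualBound σ γ s t (C₁ + C₂) := by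
  intro F E hE hEfin H hH hHE
  have hone : ∀ x, E.indicator (fun x => japaneseBracket x ^ (-γ)) x ≤ E.indicator 1 x :=
    fun x => Set.indicator_le_indicator (japaneseBracket_rpow_neg_le_one hγ x)
  rcases eq_or_ne (σ F) 0 with hF0 | hF0
  · rw [setLIntegral_measure_zero F _ hF0]
    exact zero_le
  rcases eq_or_ne (volume E) 0 with hE0 | hE0
  · have hzero : ∫⁻ x, ‖H x‖ₑ = 0 := by
      simpa [hE0] using lintegral_enorm_pow_le_of_norm_le_indicator (μ := volume) hE (A := 1)
        (fun x => (hHE x).trans (hone x)) one_ne_zero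
    have : ∀ ξ, ‖fourierExt volume H ξ‖ₑ = 0 := fun ξ =>
      le_zero_iff.1 ((enorm_fourierExt_le _ _ _).trans_eq hzero)
    simp [this]
  obtain ⟨R, hR, hinner, houter⟩ := hsplit F E hE hF0 hE0 hEfin
  obtain ⟨H₁, H₂, hH₁, hH₂, rfl, hb₁, hb₂⟩ :=
    exists_add_eq_of_le_indicator_japaneseBracket hγ hR hH hHE
  have hi₁ : Integrable H₁ := integrable_of_norm_le_indicator hE hEfin hH₁ (A := 1) fun x =>
    (hb₁ x).trans ((Set.indicator_le_indicator (truncWeight_le γ R x)).trans (hone x))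
  have hi₂ : Integrable H₂ := integrable_of_norm_le_indicator hE hEfin hH₂ hb₂
  calc _ ≤ _ := setLIntegral_enorm_fourierExt_add_le F hi₁ hi₂
    _ ≤ C₁ * σ F ^ s * volume E ^ t + C₂ * σ F ^ s * volume E ^ t :=
      add_le_add (hinner H₁ hH₁ hi₁ hb₁) (houter H₂ hH₂ hb₂)
    _ = _ := by push_cast; ring

lemma exists_restrictedDualBound_half [IsFiniteMeasure σ] {C C₀ : ℝ≥0} {β : ℝ} (hβ : 0 ≤ β)
    (hσ : GaussianUpperRegular σ C) (hdecay : FourierDecay σ β C₀) (hγ0 : 0 ≤ γ) (hγ : γ < 1 / 2) :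
    ∃ C' : ℝ≥0, RestrictedDualBound σ γ (1 / 2) (1 / 2 + (1 - 2 * γ) / (2 * (1 + β))) C' := by
  obtain ⟨C₁, hC₁⟩ := exists_lintegral_fourierExt_sq_le_of_le_truncWeight hσ hγ0 hγ
  obtain ⟨C₂, hC₂⟩ := exists_lintegral_fourierExt_sq_le_of_le_indicator hβ hσ hdecay
  set t := 1 / 2 + (1 - 2 * γ) / (2 * (1 + β)) with ht
  have hβ1 : 1 + β ≠ 0 := by positivity
  refine ⟨_, restrictedDualBound_of_split hγ0 (C₁ := C₁ ^ (1 / 2 : ℝ)) (C₂ := C₂ ^ (1 / 2 : ℝ))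
    fun F E hE _ hE0 hEfin => ?_⟩
  set m := volume.real E
  have hm : 0 < m := ENNReal.toReal_pos hE0 hEfin
  have hmE : volume E = ENNReal.ofReal m := (ofReal_measureReal hEfin).symm
  have hsqrt : (volume E ^ (t * 2)) ^ (1 / 2 : ℝ) = volume E ^ t := by
    rw [← ENNReal.rpow_mul]
    congr 1
    ring
  set R := m ^ (1 / (1 + β)) with hR
  refine ⟨R, by positivity, fun H hH hHi hHE => ?_, fun H hH hHE => ?_⟩
  · rw [← hsqrt]
    refine setLIntegral_le_of_lintegral_sq_le (continuous_fourierExt hHi).measurable.enorm ?_ F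
    refine (hC₁ R (by positivity) E hE hEfin H hH hHE).trans_eq ?_
    rw [hmE, ENNReal.ofReal_mul C₁.coe_nonneg, ENNReal.ofReal_coe_nnreal, mul_assoc,
      ← ENNReal.ofReal_mul (by positivity), ENNReal.ofReal_rpow_of_pos hm, hR, ← rpow_mul hm.le,
      ← rpow_add_one hm.ne', ht]
    congr 3
    field_simp
    ring
  · have hHi : Integrable H := integrable_of_norm_le_indicator hE hEfin hH hHE
    rw [← hsqrt]
    refine setLIntegral_le_of_lintegral_sq_le (continuous_fourierExt hHi).measurable.enorm ?_ F
    refine (hC₂ E hE hEfin H hH _ (by positivity) hHE).trans_eq ?_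
    rw [hmE, mul_assoc, ENNReal.ofReal_mul C₂.coe_nonneg, ENNReal.ofReal_coe_nnreal,
      ENNReal.ofReal_rpow_of_pos hm, hR, ← rpow_mul hm.le, ← rpow_natCast, ← rpow_mul hm.le,
      ← rpow_add hm, ht]
    congr 3
    push_cast
    field_simp
    ring

lemma exists_restrictedDualBound_diagonal [IsFiniteMeasure σ] {C : ℝ≥0}
    (hσ : GaussianUpperRegular σ C) (hγ0 : 0 ≤ γ) (hγ : γ < 1 / 2) :
    ∃ C' : ℝ≥0, RestrictedDualBound σ γ (1 - γ) (1 - γ) C' := by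
  obtain ⟨C₁, hC₁⟩ := exists_lintegral_fourierExt_sq_le_of_le_truncWeight hσ hγ0 hγ
  refine ⟨_, restrictedDualBound_of_split hγ0 (C₁ := C₁ ^ (1 / 2 : ℝ)) (C₂ := 1)
    fun F E hE hF0 hE0 hEfin => ?_⟩
  set R := σ.real F * volume.real E
  have hR : 0 < R := mul_pos (ENNReal.toReal_pos hF0 (by finiteness)) (ENNReal.toReal_pos hE0 hEfin)
  have hRFE : ENNReal.ofReal R = σ F * volume E := by
    rw [ENNReal.ofReal_mul (by positivity), ofReal_measureReal, ofReal_measureReal hEfin]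
  have hpow : ∀ K : ℝ≥0∞,
      K * σ F ^ (1 - γ) * volume E ^ (1 - γ) = K * ENNReal.ofReal (R ^ (1 - γ)) := by
    intro K
    rw [mul_assoc, ← ENNReal.mul_rpow_of_nonneg _ _ (by linarith), ← hRFE,
      ENNReal.ofReal_rpow_of_pos hR]
  refine ⟨R, hR, fun H hH hHi hHE => ?_, fun H _ hHE => ?_⟩
  · rw [hpow]
    have hsq : ∫⁻ ξ, ‖fourierExt volume H ξ‖ₑ ^ 2 ∂σ ≤
        C₁ * (ENNReal.ofReal (R ^ (1 - 2 * γ)) * volume E) := by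
      refine (hC₁ R hR E hE hEfin H hH hHE).trans_eq ?_
      rw [ENNReal.ofReal_mul C₁.coe_nonneg, ENNReal.ofReal_coe_nnreal, mul_assoc]
    refine (setLIntegral_le_of_lintegral_sq_le
      (continuous_fourierExt hHi).measurable.enorm hsq F).trans_eq ?_
    rw [mul_assoc, ← ENNReal.mul_rpow_of_nonneg _ _ (by norm_num), mul_left_comm, ← hRFE,
      ← ENNReal.ofReal_mul (by positivity), ENNReal.ofReal_rpow_of_pos (by positivity),
      ← rpow_add_one hR.ne', ← rpow_mul hR.le]
    congr 3
    ring
  · rw [hpow]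
    calc ∫⁻ ξ in F, ‖fourierExt volume H ξ‖ₑ ∂σ
      _ ≤ ∫⁻ _ in F, ENNReal.ofReal (R ^ (-γ)) * volume E ∂σ := by
        refine lintegral_mono fun ξ => (enorm_fourierExt_le _ _ _).trans ?_
        simpa only [pow_one] using lintegral_enorm_pow_le_of_norm_le_indicator hE hHE one_ne_zero
      _ = ENNReal.ofReal (R ^ (-γ) * R) := by
        rw [setLIntegral_const, ENNReal.ofReal_mul (by positivity), hRFE]
        ring
      _ = _ := by
        rw [← rpow_add_one hR.ne', ENNReal.coe_one, one_mul]
        congr 2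
        ring

end RestrictedDual

/-! ### From the dual bound to the weak-type estimate -/

section Lorentz

variable {α : Type*} [MeasurableSpace α] {μ : Measure α}

lemma exists_norm_le_indicator_mul_eq {T : α → ℂ} (hT : Measurable T) {w : α → ℝ}
    (hw : Measurable w) (hw0 : 0 ≤ w) {E : Set α} (hE : MeasurableSet E) :
    ∃ H : α → ℂ, Measurable H ∧ (∀ x, ‖H x‖ ≤ E.indicator w x) ∧
      ∀ x, T x * H x = (E.indicator (fun x => ‖T x‖ * w x) x : ℝ) := by
  refine ⟨E.indicator fun x => conj (T x) / (‖T x‖ : ℂ) * (w x : ℂ), ?_, fun x => ?_, fun x => ?_⟩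
  · have hconj : Measurable fun x => conj (T x) := Complex.continuous_conj.measurable.comp hT
    exact Measurable.indicator (by fun_prop) hE
  all_goals by_cases hx : x ∈ E
  · simp only [Set.indicator_of_mem hx, norm_mul, norm_div, RCLike.norm_conj, Complex.norm_real,
      norm_norm, Real.norm_of_nonneg (hw0 x)]
    exact mul_le_of_le_one_left (hw0 x) (div_self_le_one _)
  · simp [hx]
  · rw [Set.indicator_of_mem hx, Set.indicator_of_mem hx, ← mul_assoc, ← mul_div_assoc,
      Complex.mul_conj, Complex.normSq_eq_norm_sq, Complex.ofReal_mul, ← Complex.ofReal_div, sq,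
      mul_self_div_self]
  · simp [hx]

lemma enorm_integral_mul_le_lintegral_superlevel {g P : α → ℂ} (hg : Measurable g)
    (hP : Measurable P) :
    ‖∫ x, g x * P x ∂μ‖ₑ ≤ ∫⁻ τ in Set.Ioi (0 : ℝ), ∫⁻ x in {x | τ < ‖g x‖}, ‖P x‖ₑ ∂μ := by
  calc ‖∫ x, g x * P x ∂μ‖ₑ ≤ ∫⁻ x, ‖g x * P x‖ₑ ∂μ := enorm_integral_le_lintegral_enorm _
    _ = ∫⁻ x, ENNReal.ofReal ‖g x‖ ∂(μ.withDensity fun x => ‖P x‖ₑ) := by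
      rw [lintegral_withDensity_eq_lintegral_mul _ hP.enorm (by fun_prop)]
      simp only [Pi.mul_apply, enorm_mul, ofReal_norm, mul_comm]
    _ = ∫⁻ τ in Set.Ioi (0 : ℝ), μ.withDensity (fun x => ‖P x‖ₑ) {x | τ < ‖g x‖} :=
      lintegral_eq_lintegral_meas_lt _ (.of_forall fun _ => norm_nonneg _) hg.norm.aemeasurable
    _ = _ := lintegral_congr fun τ =>
      withDensity_apply _ (measurableSet_lt measurable_const hg.norm)

lemma lorentzNorm_one (p : ℝ) (g : α → ℂ) :
    lorentzNorm μ p 1 g =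
      ENNReal.ofReal p * ∫⁻ τ in Set.Ioi (0 : ℝ), μ {x | τ < ‖g x‖} ^ (1 / p) := by
  simp only [lorentzNorm, div_one, ENNReal.rpow_one]
  congr 1
  refine setLIntegral_congr_fun measurableSet_Ioi fun τ hτ => ?_
  rw [mul_comm]
  exact ENNReal.mul_div_cancel_right (ENNReal.ofReal_pos.2 hτ).ne' ENNReal.ofReal_ne_top

lemma mul_measure_rpow_le_of_forall_subset [SigmaFinite μ] {a B : ℝ≥0∞} {r : ℝ} (hr : 0 < r)
    {S : Set α} (hS : MeasurableSet S)
    (h : ∀ E ⊆ S, MeasurableSet E → μ E ≠ ∞ → a * μ E ^ r ≤ B) : a * μ S ^ r ≤ B := by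
  rw [← Measure.iSup_restrict_spanningSets, ← ENNReal.orderIsoRpow_apply r hr, OrderIso.map_iSup,
    ENNReal.mul_iSup]
  refine iSup_le fun i => ?_
  rw [ENNReal.orderIsoRpow_apply, Measure.restrict_apply hS]
  exact h _ Set.inter_subset_left (hS.inter (measurableSet_spanningSets μ i))
    (measure_ne_top_of_subset Set.inter_subset_right (measure_spanningSets_lt_top μ i).ne)

lemma mul_rpow_le_of_mul_le_mul_rpow_one_sub {a K m : ℝ≥0∞} {r : ℝ} (hr0 : 0 < r) (hr1 : r ≤ 1)
    (hm : m ≠ ∞) (h : a * m ≤ K * m ^ (1 - r)) : a * m ^ r ≤ K := by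
  rcases eq_or_ne m 0 with rfl | hm0
  · simp [hr0]
  have hpos : m ^ (1 - r) ≠ 0 := (ENNReal.rpow_pos (pos_iff_ne_zero.2 hm0) hm).ne'
  have hfin : m ^ (1 - r) ≠ ∞ := ENNReal.rpow_ne_top_of_nonneg (by linarith) hm
  refine (ENNReal.mul_le_mul_iff_left hpos hfin).1 ?_
  rwa [mul_assoc, ← ENNReal.rpow_add _ _ hm0 hm, add_sub_cancel, ENNReal.rpow_one]

variable {V : Type*} [NormedAddCommGroup V] [InnerProductSpace ℝ V] [MeasurableSpace V]
  {σ : Measure V} {γ : ℝ} {g : V → ℂ}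

lemma fourierExt_eq_zero_of_not_integrable (hg : AEStronglyMeasurable g σ) (hgi : ¬Integrable g σ)
    (x : V) : fourierExt σ g x = 0 := by
  refine integral_undef fun hi => hgi ((integrable_norm_iff hg).1 ?_)
  simpa only [norm_mul, Complex.norm_exp_I_mul_ofReal, one_mul] using hi.norm

variable [BorelSpace V] [FiniteDimensional ℝ V]

lemma RestrictedDualBound.mul_volume_le [SFinite σ] {s t : ℝ} {C : ℝ≥0} (hγ : 0 ≤ γ)
    (hdual : RestrictedDualBound σ γ s t C) (hgm : Measurable g) (hg : Integrable g σ) {l : ℝ}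
    {E : Set V} (hE : MeasurableSet E) (hEfin : volume E ≠ ∞)
    (hEl : ∀ x ∈ E, l < ‖fourierExt σ g x‖ * japaneseBracket x ^ (-γ)) :
    ENNReal.ofReal l * volume E ≤
      C * (∫⁻ τ in Set.Ioi (0 : ℝ), σ {ξ | τ < ‖g ξ‖} ^ s) * volume E ^ t := by
  set T := fourierExt σ g
  have hT : Continuous T := continuous_fourierExt hg
  obtain ⟨H, hH, hHE, hTH⟩ := exists_norm_le_indicator_mul_eq hT.measurable
    (measurable_japaneseBracket.pow_const (-γ))
    (fun x => (rpow_pos_of_pos (japaneseBracket_pos x) _).le) hE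
  set r := E.indicator fun x => ‖T x‖ * japaneseBracket x ^ (-γ)
  have hr0 : 0 ≤ r := fun x => Set.indicator_nonneg
    (fun y _ => mul_nonneg (norm_nonneg _) (rpow_pos_of_pos (japaneseBracket_pos y) _).le) x
  have hHi : Integrable H := integrable_of_norm_le_indicator hE hEfin hH (A := 1) fun x =>
    (hHE x).trans (Set.indicator_le_indicator (japaneseBracket_rpow_neg_le_one hγ x))
  have hri : Integrable r := by
    refine (hHi.bdd_mul (c := ∫ ξ, ‖g ξ‖ ∂σ) hT.aestronglyMeasurable
      (.of_forall (norm_fourierExt_le σ g))).norm.congr (.of_forall fun x => ?_)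
    simp only [hTH, Complex.norm_real, Real.norm_of_nonneg (hr0 x)]
  calc ENNReal.ofReal l * volume E ≤ ∫⁻ x, ENNReal.ofReal (r x) := by
        rw [← lintegral_indicator_const hE]
        refine lintegral_mono (Set.indicator_le fun x hx => ENNReal.ofReal_le_ofReal ?_)
        simpa only [r, Set.indicator_of_mem hx] using (hEl x hx).le
    _ = ‖∫ x, T x * H x‖ₑ := by simp_rw [hTH, enorm_integral_ofReal hri hr0]
    _ = ‖∫ ξ, g ξ * fourierExt volume H ξ ∂σ‖ₑ := by rw [integral_fourierExt_mul hg hHi]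
    _ ≤ ∫⁻ τ in Set.Ioi (0 : ℝ), ∫⁻ ξ in {ξ | τ < ‖g ξ‖}, ‖fourierExt volume H ξ‖ₑ ∂σ :=
      enorm_integral_mul_le_lintegral_superlevel hgm (continuous_fourierExt hHi).measurable
    _ ≤ ∫⁻ τ in Set.Ioi (0 : ℝ), C * σ {ξ | τ < ‖g ξ‖} ^ s * volume E ^ t :=
      lintegral_mono fun τ => hdual _ E hE hEfin H hH hHE
    _ = _ := by
      have hdist : Antitone fun τ : ℝ => σ {ξ | τ < ‖g ξ‖} :=
        fun a b hab => measure_mono fun ξ hξ => hab.trans_lt hξ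
      have hmeas : Measurable fun τ : ℝ => σ {ξ | τ < ‖g ξ‖} ^ s := hdist.measurable.pow_const s
      rw [lintegral_mul_const _ (hmeas.const_mul _), lintegral_const_mul _ hmeas]

lemma RestrictedDualBound.wLorentzNorm_le [SFinite σ] {p q : ℝ} {C : ℝ≥0} (hγ : 0 ≤ γ)
    (hp : 0 < p) (hq : 1 ≤ q) (hdual : RestrictedDualBound σ γ (1 / p) (1 - 1 / q) C)
    (hg : Measurable g) :
    wLorentzNorm volume q (fun x => fourierExt σ g x * ((japaneseBracket x ^ (-γ) : ℝ) : ℂ)) ≤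
      (C / p.toNNReal : ℝ≥0) * lorentzNorm σ p 1 g := by
  have hq0 : 0 < 1 / q := by positivity
  have hnorm : ∀ x, ‖fourierExt σ g x * ((japaneseBracket x ^ (-γ) : ℝ) : ℂ)‖ =
      ‖fourierExt σ g x‖ * japaneseBracket x ^ (-γ) := fun x => by
    rw [norm_mul, Complex.norm_real,
      Real.norm_of_nonneg (rpow_pos_of_pos (japaneseBracket_pos x) _).le]
  have hconst : ((C / p.toNNReal : ℝ≥0) : ℝ≥0∞) * lorentzNorm σ p 1 g =
      C * ∫⁻ τ in Set.Ioi (0 : ℝ), σ {ξ | τ < ‖g ξ‖} ^ (1 / p) := by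
    rw [lorentzNorm_one, ← mul_assoc, ENNReal.ofReal, ← ENNReal.coe_mul,
      div_mul_cancel₀ _ (Real.toNNReal_pos.2 hp).ne']
  rw [hconst]
  refine iSup_le fun ⟨l, hl⟩ => ?_
  simp only [hnorm]
  by_cases hgi : Integrable g σ
  · refine mul_measure_rpow_le_of_forall_subset hq0 (measurableSet_lt measurable_const
      ((continuous_fourierExt hgi).measurable.norm.mul
        (measurable_japaneseBracket.pow_const (-γ)))) fun E hES hE hEfin => ?_
    exact mul_rpow_le_of_mul_le_mul_rpow_one_sub hq0 ((div_le_one (by positivity)).2 hq) hEfin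
      (hdual.mul_volume_le hγ hg hgi hE hEfin fun x hx => hES hx)
  · simp [fourierExt_eq_zero_of_not_integrable hg.aestronglyMeasurable hgi, hl.not_gt,
      -one_div, hq0]

end Lorentz

/-! ### Rotation-invariant measures on the unit sphere -/

section RoundSphere

variable {V : Type*} [NormedAddCommGroup V] [InnerProductSpace ℝ V] [MeasurableSpace V]

/-- A measure carried by the unit sphere and invariant under all linear isometries. -/
structure IsRoundSphereMeasure (σ : Measure V) : Prop where
  measurePreserving (L : V ≃ₗᵢ[ℝ] V) : MeasurePreserving L σ σ
  ae_norm_eq_one : ∀ᵐ ξ ∂σ, ‖ξ‖ = 1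

namespace IsRoundSphereMeasure

variable [BorelSpace V] {σ : Measure V}

lemma integral_comp (hσ : IsRoundSphereMeasure σ) (L : V ≃ₗᵢ[ℝ] V) (f : V → ℝ) :
    ∫ ξ, f (L ξ) ∂σ = ∫ ξ, f ξ ∂σ :=
  (hσ.measurePreserving L).integral_comp L.toHomeomorph.measurableEmbedding f

lemma lintegral_comp (hσ : IsRoundSphereMeasure σ) (L : V ≃ₗᵢ[ℝ] V) (f : V → ℝ≥0∞) :
    ∫⁻ ξ, f (L ξ) ∂σ = ∫⁻ ξ, f ξ ∂σ :=
  (hσ.measurePreserving L).lintegral_comp_emb L.toHomeomorph.measurableEmbedding f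

lemma integral_cos_inner_congr (hσ : IsRoundSphereMeasure σ) {x y : V} (h : ‖x‖ = ‖y‖) :
    ∫ ξ, cos ⟪x, ξ⟫ ∂σ = ∫ ξ, cos ⟪y, ξ⟫ ∂σ := by
  obtain ⟨L, rfl⟩ : ∃ L : V ≃ₗᵢ[ℝ] V, L x = y := ⟨_, Submodule.reflection_sub h⟩
  rw [← hσ.integral_comp L fun ξ => cos ⟪L x, ξ⟫]
  simp_rw [LinearIsometryEquiv.inner_map_map]

lemma lintegral_gaussian_sub_congr (hσ : IsRoundSphereMeasure σ) (a : ℝ) {x y : V}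
    (h : ‖x‖ = ‖y‖) :
    ∫⁻ η, ENNReal.ofReal (gaussian a (x - η)) ∂σ =
      ∫⁻ η, ENNReal.ofReal (gaussian a (y - η)) ∂σ := by
  obtain ⟨L, rfl⟩ : ∃ L : V ≃ₗᵢ[ℝ] V, L x = y := ⟨_, Submodule.reflection_sub h⟩
  rw [← hσ.lintegral_comp L fun η => ENNReal.ofReal (gaussian a (L x - η))]
  simp_rw [gaussian, ← map_sub, LinearIsometryEquiv.norm_map]

lemma charFun_eq_integral_cos [IsFiniteMeasure σ] [SecondCountableTopology V]
    (hσ : IsRoundSphereMeasure σ) (x : V) :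
    charFun σ x = ((∫ ξ, cos ⟪x, ξ⟫ ∂σ : ℝ) : ℂ) := by
  have hodd : ∫ ξ, sin ⟪x, ξ⟫ ∂σ = 0 := by
    have hneg := hσ.integral_comp (LinearIsometryEquiv.neg ℝ) fun ξ => sin ⟪x, ξ⟫
    simp only [LinearIsometryEquiv.coe_neg, inner_neg_right, sin_neg, integral_neg] at hneg
    linarith
  have hInt {f : ℝ → ℝ} (hf : Continuous f) (hf1 : ∀ t, |f t| ≤ 1) :
      Integrable (fun ξ => ((f ⟪x, ξ⟫ : ℝ) : ℂ)) σ :=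
    .of_bound (by fun_prop) 1 (.of_forall fun ξ => by simpa using hf1 _)
  calc charFun σ x = ∫ ξ, (((cos ⟪x, ξ⟫ : ℝ) : ℂ) + ((sin ⟪x, ξ⟫ : ℝ) : ℂ) * I) ∂σ := by
        simp_rw [charFun_apply, Complex.exp_mul_I, Complex.ofReal_cos, Complex.ofReal_sin,
          real_inner_comm x]
    _ = _ := by
        rw [integral_add (hInt continuous_cos abs_cos_le_one)
          ((hInt continuous_sin abs_sin_le_one).mul_const I), integral_mul_const,
          integral_complex_ofReal, integral_complex_ofReal, hodd, Complex.ofReal_zero, zero_mul,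
          add_zero]

section FiniteDimensional

variable [FiniteDimensional ℝ V] [IsFiniteMeasure σ]

lemma integrable_of_continuous (hσ : IsRoundSphereMeasure σ) {f : V → ℝ} (hf : Continuous f) :
    Integrable f σ := by
  obtain ⟨C, hC⟩ := (isCompact_sphere (0 : V) 1).exists_bound_of_continuousOn hf.continuousOn
  refine .of_bound hf.aestronglyMeasurable C ?_
  filter_upwards [hσ.ae_norm_eq_one] with ξ hξ
  exact hC ξ (by simpa using hξ)

lemma hasDerivAt_integral (hσ : IsRoundSphereMeasure σ) {F F' : ℝ → V → ℝ}
    (hF : ∀ t, Continuous (F t)) (hF' : Continuous (Function.uncurry F'))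
    (hderiv : ∀ ξ t, HasDerivAt (F · ξ) (F' t ξ) t) (t : ℝ) :
    HasDerivAt (fun t => ∫ ξ, F t ξ ∂σ) (∫ ξ, F' t ξ ∂σ) t := by
  obtain ⟨C, hC⟩ := ((isCompact_closedBall t 1).prod
    (isCompact_sphere (0 : V) 1)).exists_bound_of_continuousOn hF'.continuousOn
  refine (hasDerivAt_integral_of_dominated_loc_of_deriv_le (closedBall_mem_nhds t one_pos)
    (.of_forall fun s => (hF s).aestronglyMeasurable) (hσ.integrable_of_continuous (hF t))
    (hF'.comp (by fun_prop : Continuous fun ξ => (t, ξ))).aestronglyMeasurable ?_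
    (integrable_const C) (.of_forall fun ξ s _ => hderiv ξ s)).2
  filter_upwards [hσ.ae_norm_eq_one] with ξ hξ s hs
  exact hC (s, ξ) ⟨hs, by simpa using hξ⟩

end FiniteDimensional

end IsRoundSphereMeasure

end RoundSphere

/-! ### Fourier decay of rotation-invariant measures on the sphere -/

section BesselDecay

/-- The energy of a solution of the Bessel equation `r (f + f'') + m f' = 0` with derivative `f'`.
The cross term cancels the derivative of the weight `r ^ m` to leading order. -/
def besselEnergy (m : ℝ) (f f' : ℝ → ℝ) (r : ℝ) : ℝ :=
  r ^ m * (f r ^ 2 + f' r ^ 2 + m / r * (f r * f' r))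

variable {m r : ℝ} {f f' f'' : ℝ → ℝ}

lemma hasDerivAt_besselEnergy (hr : 0 < r) (hf : HasDerivAt f (f' r) r)
    (hf' : HasDerivAt f' (f'' r) r) (hode : r * (f r + f'' r) + m * f' r = 0) :
    HasDerivAt (besselEnergy m f f') (-(m * r ^ m / r ^ 2 * (f r * f' r))) r := by
  have hpow : HasDerivAt (fun r : ℝ => r ^ m) (m * r ^ m / r) r := by
    convert! hasDerivAt_rpow_const (p := m) (.inl hr.ne') using 1
    rw [rpow_sub_one hr.ne', mul_div_assoc]
  have hdiv : HasDerivAt (fun r : ℝ => m / r) (-(m / r ^ 2)) r := by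
    simpa [div_eq_mul_inv] using (hasDerivAt_inv hr.ne').const_mul m
  have hsolve : f'' r = -f r - m * f' r / r := by
    field_simp
    linarith
  convert! hpow.mul (((hf.pow 2).add (hf'.pow 2)).add (hdiv.mul (hf.mul hf'))) using 1
  simp only [Pi.pow_apply, Pi.add_apply, Pi.mul_apply, hsolve]
  field_simp
  push_cast
  ring

lemma le_two_mul_besselEnergy (hm : 0 ≤ m) (hr : 0 < r) (hmr : m ≤ r) :
    r ^ m * (f r ^ 2 + f' r ^ 2) ≤ 2 * besselEnergy m f f' r := by
  have hquot : 0 ≤ m / r := by positivity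
  have hquot1 : m / r ≤ 1 := (div_le_one hr).2 hmr
  have hcross : f r ^ 2 + f' r ^ 2 ≤ 2 * (f r ^ 2 + f' r ^ 2 + m / r * (f r * f' r)) := by
    nlinarith [mul_nonneg hquot (sq_nonneg (f r + f' r)),
      mul_nonneg (sub_nonneg.2 hquot1) (add_nonneg (sq_nonneg (f r)) (sq_nonneg (f' r)))]
  calc r ^ m * (f r ^ 2 + f' r ^ 2)
      ≤ r ^ m * (2 * (f r ^ 2 + f' r ^ 2 + m / r * (f r * f' r))) := by gcongr
    _ = _ := by rw [besselEnergy]; ring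

lemma besselEnergy_nonneg (hm : 0 ≤ m) (hr : 0 < r) (hmr : m ≤ r) :
    0 ≤ besselEnergy m f f' r := by
  have hlower := le_two_mul_besselEnergy (f := f) (f' := f') hm hr hmr
  have : 0 ≤ r ^ m * (f r ^ 2 + f' r ^ 2) := by positivity
  linarith

lemma antitoneOn_besselEnergy_mul_exp (hf : ∀ r, HasDerivAt f (f' r) r)
    (hf' : ∀ r, HasDerivAt f' (f'' r) r) (hode : ∀ r, r * (f r + f'' r) + m * f' r = 0)
    (hm : 0 ≤ m) {R : ℝ} (hR : 0 < R) (hmR : m ≤ R) :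
    AntitoneOn (fun r => besselEnergy m f f' r * exp (m / r)) (Set.Ici R) := by
  have hderiv (r : ℝ) (hr : 0 < r) :
      HasDerivAt (fun r => besselEnergy m f f' r * exp (m / r))
        (-(m / r ^ 2 * exp (m / r)) * (r ^ m * (f r * f' r) + besselEnergy m f f' r)) r := by
    have hdiv : HasDerivAt (fun r : ℝ => m / r) (-(m / r ^ 2)) r := by
      simpa [div_eq_mul_inv] using (hasDerivAt_inv hr.ne').const_mul m
    convert! (hasDerivAt_besselEnergy hr (hf r) (hf' r) (hode r)).mul hdiv.exp using 1
    ring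
  have hpos {r : ℝ} (hr : r ∈ Set.Ici R) : 0 < r := hR.trans_le hr
  refine antitoneOn_of_deriv_nonpos (convex_Ici _)
    (fun r hr => (hderiv r (hpos hr)).continuousAt.continuousWithinAt)
    (fun r hr => (hderiv r (hpos (interior_subset hr))).differentiableAt.differentiableWithinAt)
    fun r hr => ?_
  have hr0 : 0 < r := hpos (interior_subset hr)
  rw [(hderiv r hr0).deriv]
  refine mul_nonpos_of_nonpos_of_nonneg (neg_nonpos.2 (by positivity)) ?_
  have hlower := le_two_mul_besselEnergy (f := f) (f' := f') hm hr0
    (hmR.trans (interior_subset hr))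
  have hsq : 0 ≤ r ^ m * (f r + f' r) ^ 2 := by positivity
  linarith

lemma exists_rpow_mul_sq_le_of_bessel (hf : ∀ r, HasDerivAt f (f' r) r)
    (hf' : ∀ r, HasDerivAt f' (f'' r) r) (hode : ∀ r, r * (f r + f'' r) + m * f' r = 0)
    (hm : 0 ≤ m) {R : ℝ} (hR : 0 < R) (hmR : m ≤ R) :
    ∃ C, ∀ r, R ≤ r → r ^ m * f r ^ 2 ≤ C := by
  refine ⟨2 * (besselEnergy m f f' R * exp (m / R)), fun r hr => ?_⟩
  have hr0 : 0 < r := hR.trans_le hr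
  calc r ^ m * f r ^ 2 ≤ r ^ m * (f r ^ 2 + f' r ^ 2) := by
        gcongr
        exact le_add_of_nonneg_right (sq_nonneg _)
    _ ≤ 2 * besselEnergy m f f' r := le_two_mul_besselEnergy hm hr0 (hmR.trans hr)
    _ ≤ 2 * (besselEnergy m f f' r * exp (m / r)) := by
        gcongr
        exact le_mul_of_one_le_right (besselEnergy_nonneg hm hr0 (hmR.trans hr))
          (one_le_exp (by positivity))
    _ ≤ 2 * (besselEnergy m f f' R * exp (m / R)) :=
        mul_le_mul_of_nonneg_left (antitoneOn_besselEnergy_mul_exp hf hf' hode hm hR hmR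
          (Set.mem_Ici.2 le_rfl) hr hr) zero_le_two

end BesselDecay

lemma natCast_finrank_orthogonal_span_singleton {V : Type*} [NormedAddCommGroup V]
    [InnerProductSpace ℝ V] [FiniteDimensional ℝ V] {e : V} (he : e ≠ 0) :
    (finrank ℝ (ℝ ∙ e)ᗮ : ℝ) = finrank ℝ V - 1 := by
  rw [← Submodule.finrank_add_finrank_orthogonal (ℝ ∙ e), finrank_span_singleton he]
  push_cast
  ring

lemma norm_sq_eq_inner_sq_add_sum_inner_sq {V ι : Type*} [NormedAddCommGroup V]
    [InnerProductSpace ℝ V] [Fintype ι] {e : V} (he : ‖e‖ = 1)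
    (b : OrthonormalBasis ι ℝ (ℝ ∙ e)ᗮ) (ξ : V) :
    ‖ξ‖ ^ 2 = ⟪e, ξ⟫ ^ 2 + ∑ i, ⟪(b i : V), ξ⟫ ^ 2 := by
  have hproj : ‖(ℝ ∙ e).starProjection ξ‖ ^ 2 = ⟪e, ξ⟫ ^ 2 := by
    rw [Submodule.starProjection_unit_singleton ℝ he, norm_smul, he, mul_one, norm_eq_abs, sq_abs]
  have hcompl : ‖(ℝ ∙ e)ᗮ.starProjection ξ‖ ^ 2 = ∑ i, ⟪(b i : V), ξ⟫ ^ 2 := by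
    rw [Submodule.starProjection_apply, Submodule.norm_coe, ← b.sum_sq_norm_inner_right]
    simp_rw [norm_eq_abs, sq_abs, Submodule.inner_orthogonalProjectionOnto_eq_of_mem_left]
  rw [Submodule.norm_sq_eq_add_norm_sq_starProjection ξ (ℝ ∙ e), hproj, hcompl]

section SphereFourierDecay

variable {V : Type*} [NormedAddCommGroup V] [InnerProductSpace ℝ V] [MeasurableSpace V]
  [BorelSpace V] {σ : Measure V}

namespace IsRoundSphereMeasure

lemma integral_sin_inner_mul_inner_eq_zero (hσ : IsRoundSphereMeasure σ) {x y : V}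
    (hxy : ⟪x, y⟫ = 0) : ∫ ξ, sin ⟪x, ξ⟫ * ⟪y, ξ⟫ ∂σ = 0 := by
  set L := Submodule.reflection (ℝ ∙ y)ᗮ
  have hLx : L x = x := Submodule.reflection_mem_subspace_eq_self
    (Submodule.mem_orthogonal_singleton_iff_inner_left.2 hxy)
  have hLy : L y = -y := Submodule.reflection_orthogonalComplement_singleton_eq_neg y
  have hodd := hσ.integral_comp L fun ξ => sin ⟪x, ξ⟫ * ⟪y, ξ⟫
  have hinner_x (ξ : V) : ⟪x, L ξ⟫ = ⟪x, ξ⟫ := by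
    rw [← L.inner_map_map x ξ, hLx]
  have hinner_y (ξ : V) : ⟪y, L ξ⟫ = -⟪y, ξ⟫ := by
    rw [← L.inner_map_map y ξ, hLy, inner_neg_left, neg_neg]
  simp only [hinner_x, hinner_y, mul_neg, integral_neg] at hodd
  linarith

variable [FiniteDimensional ℝ V] [IsFiniteMeasure σ]

/-- Differentiate `∫ sin ⟪x, ξ⟫ ⟪y, ξ⟫ = 0` along the orthogonal pairs
`x = r e + t v`, `y = r v - t e` at `t = 0`. -/
lemma mul_integral_cos_mul_inner_sq (hσ : IsRoundSphereMeasure σ) {e v : V} (he : ‖e‖ = 1)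
    (hv : ‖v‖ = 1) (hev : ⟪e, v⟫ = 0) (r : ℝ) :
    r * ∫ ξ, cos (r * ⟪e, ξ⟫) * ⟪v, ξ⟫ ^ 2 ∂σ = ∫ ξ, sin (r * ⟪e, ξ⟫) * ⟪e, ξ⟫ ∂σ := by
  have hzero (t : ℝ) :
      ∫ ξ, sin (r * ⟪e, ξ⟫ + t * ⟪v, ξ⟫) * (r * ⟪v, ξ⟫ - t * ⟪e, ξ⟫) ∂σ = 0 := by
    have horth : ⟪r • e + t • v, r • v - t • e⟫ = 0 := by
      simp only [inner_add_left, inner_sub_right, real_inner_smul_left, real_inner_smul_right,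
        real_inner_self_eq_norm_sq, he, hv, real_inner_comm e v, hev]
      ring
    simpa only [inner_add_left, inner_sub_left, real_inner_smul_left] using
      hσ.integral_sin_inner_mul_inner_eq_zero horth
  have hderiv := hσ.hasDerivAt_integral
    (F := fun t ξ => sin (r * ⟪e, ξ⟫ + t * ⟪v, ξ⟫) * (r * ⟪v, ξ⟫ - t * ⟪e, ξ⟫))
    (F' := fun t ξ => cos (r * ⟪e, ξ⟫ + t * ⟪v, ξ⟫) * ⟪v, ξ⟫ * (r * ⟪v, ξ⟫ - t * ⟪e, ξ⟫) +
      sin (r * ⟪e, ξ⟫ + t * ⟪v, ξ⟫) * -⟪e, ξ⟫)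
    (fun t => by fun_prop) (by fun_prop)
    (fun ξ t => (((hasDerivAt_mul_const _).const_add _).sin).mul
      ((hasDerivAt_mul_const _).const_sub _)) 0
  simp only [hzero, zero_mul, add_zero, sub_zero] at hderiv
  have hInt : ∫ ξ, (r * (cos (r * ⟪e, ξ⟫) * ⟪v, ξ⟫ ^ 2) - sin (r * ⟪e, ξ⟫) * ⟪e, ξ⟫) ∂σ = 0 := by
    rw [← hderiv.unique (hasDerivAt_const 0 0)]
    congr with ξ
    ring
  rw [integral_sub (hσ.integrable_of_continuous (by fun_prop))
    (hσ.integrable_of_continuous (by fun_prop)), integral_const_mul] at hInt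
  linarith

/-- The Bessel equation `r (f + f'') + (d - 1) f' = 0` for `f r = ∫ cos (r ⟪e, ξ⟫)`. -/
lemma mul_integral_cos_mul_one_sub_inner_sq (hσ : IsRoundSphereMeasure σ) {e : V} (he : ‖e‖ = 1)
    (r : ℝ) :
    r * ∫ ξ, cos (r * ⟪e, ξ⟫) * (1 - ⟪e, ξ⟫ ^ 2) ∂σ =
      ((finrank ℝ V : ℝ) - 1) * ∫ ξ, sin (r * ⟪e, ξ⟫) * ⟪e, ξ⟫ ∂σ := by
  set b := stdOrthonormalBasis ℝ (ℝ ∙ e)ᗮ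
  have hsum : ∫ ξ, cos (r * ⟪e, ξ⟫) * (1 - ⟪e, ξ⟫ ^ 2) ∂σ =
      ∑ i, ∫ ξ, cos (r * ⟪e, ξ⟫) * ⟪(b i : V), ξ⟫ ^ 2 ∂σ := by
    rw [← integral_finsetSum _ fun i _ => hσ.integrable_of_continuous (by fun_prop)]
    refine integral_congr_ae ?_
    filter_upwards [hσ.ae_norm_eq_one] with ξ hξ
    rw [← Finset.mul_sum, ← one_pow 2, ← hξ, norm_sq_eq_inner_sq_add_sum_inner_sq he b ξ,
      add_sub_cancel_left]
  have hterm (i) : r * ∫ ξ, cos (r * ⟪e, ξ⟫) * ⟪(b i : V), ξ⟫ ^ 2 ∂σ =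
      ∫ ξ, sin (r * ⟪e, ξ⟫) * ⟪e, ξ⟫ ∂σ :=
    hσ.mul_integral_cos_mul_inner_sq he (b.norm_eq_one i)
      (Submodule.mem_orthogonal_singleton_iff_inner_right.1 (b i).2) r
  rw [hsum, Finset.mul_sum, Finset.sum_congr rfl fun i _ => hterm i, Finset.sum_const,
    Finset.card_univ, Fintype.card_fin, nsmul_eq_mul,
    natCast_finrank_orthogonal_span_singleton (norm_ne_zero_iff.1 (he ▸ one_ne_zero))]

lemma exists_rpow_mul_sq_integral_cos_le [Nontrivial V] (hσ : IsRoundSphereMeasure σ) :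
    ∃ C, ∀ x : V, (finrank ℝ V : ℝ) ≤ ‖x‖ →
      ‖x‖ ^ ((finrank ℝ V : ℝ) - 1) * (∫ ξ, cos ⟪x, ξ⟫ ∂σ) ^ 2 ≤ C := by
  obtain ⟨e, he⟩ := exists_norm_eq V zero_le_one
  have hdim : (1 : ℝ) ≤ finrank ℝ V := Nat.one_le_cast.2 Module.finrank_pos
  have hf (r : ℝ) : HasDerivAt (fun r => ∫ ξ, cos (r * ⟪e, ξ⟫) ∂σ)
      (∫ ξ, -sin (r * ⟪e, ξ⟫) * ⟪e, ξ⟫ ∂σ) r :=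
    hσ.hasDerivAt_integral (fun t => by fun_prop) (by fun_prop)
      (fun ξ t => (hasDerivAt_mul_const _).cos) r
  have hf' (r : ℝ) : HasDerivAt (fun r => ∫ ξ, -sin (r * ⟪e, ξ⟫) * ⟪e, ξ⟫ ∂σ)
      (∫ ξ, -(cos (r * ⟪e, ξ⟫) * ⟪e, ξ⟫) * ⟪e, ξ⟫ ∂σ) r :=
    hσ.hasDerivAt_integral (fun t => by fun_prop) (by fun_prop)
      (fun ξ t => (hasDerivAt_mul_const _).sin.neg.mul_const _) r
  have hode (r : ℝ) : r * (∫ ξ, cos (r * ⟪e, ξ⟫) ∂σ +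
      ∫ ξ, -(cos (r * ⟪e, ξ⟫) * ⟪e, ξ⟫) * ⟪e, ξ⟫ ∂σ) +
      ((finrank ℝ V : ℝ) - 1) * ∫ ξ, -sin (r * ⟪e, ξ⟫) * ⟪e, ξ⟫ ∂σ = 0 := by
    rw [← integral_add (hσ.integrable_of_continuous (by fun_prop))
      (hσ.integrable_of_continuous (by fun_prop))]
    simp_rw [neg_mul, integral_neg, mul_neg, ← sub_eq_add_neg, mul_assoc, ← sq]
    simpa only [mul_sub, mul_one, sub_eq_zero] using hσ.mul_integral_cos_mul_one_sub_inner_sq he r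
  obtain ⟨C, hC⟩ := exists_rpow_mul_sq_le_of_bessel hf hf' hode (R := finrank ℝ V)
    (by linarith) (by linarith) (by linarith)
  refine ⟨C, fun x hx => ?_⟩
  have hradial : ∫ ξ, cos ⟪x, ξ⟫ ∂σ = ∫ ξ, cos (‖x‖ * ⟪e, ξ⟫) ∂σ := by
    rw [hσ.integral_cos_inner_congr (y := ‖x‖ • e) (by simp [norm_smul, he])]
    simp_rw [real_inner_smul_left]
  rw [hradial]
  exact hC _ hx

lemma exists_fourierDecay [Nontrivial V] (hσ : IsRoundSphereMeasure σ) :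
    ∃ C, FourierDecay σ (((finrank ℝ V : ℝ) - 1) / 2) C := by
  obtain ⟨C, hC⟩ := hσ.exists_rpow_mul_sq_integral_cos_le
  set β : ℝ := ((finrank ℝ V : ℝ) - 1) / 2 with hβ
  have hβ0 : 0 ≤ β :=
    div_nonneg (sub_nonneg.2 (Nat.one_le_cast.2 Module.finrank_pos)) zero_le_two
  refine ⟨(√C + (finrank ℝ V : ℝ) ^ β * σ.real Set.univ).toNNReal, fun x => ?_⟩
  rw [coe_toNNReal _ (by positivity)]
  rcases le_total (finrank ℝ V : ℝ) ‖x‖ with hx | hx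
  · refine le_add_of_le_of_nonneg (le_sqrt_of_sq_le ?_) (by positivity)
    convert hC x hx using 1
    rw [hσ.charFun_eq_integral_cos, Complex.norm_real, mul_pow, norm_eq_abs, sq_abs,
      ← rpow_natCast (_ ^ β), ← rpow_mul (norm_nonneg x)]
    congr 2
    rw [hβ]
    push_cast
    ring
  · refine le_add_of_nonneg_of_le (sqrt_nonneg C) ?_
    gcongr
    exact norm_charFun_le x

end IsRoundSphereMeasure

end SphereFourierDecay

/-! ### Gaussian upper regularity of rotation-invariant measures on the sphere -/

section SphereGaussianRegularity

variable {V : Type*} [NormedAddCommGroup V] [InnerProductSpace ℝ V]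

lemma gaussian_inv_norm_smul_sub_le {a t : ℝ} (ha : 0 ≤ a) (hat : a * t ^ 2 ≤ 1) {x : V}
    (hx : 1 ≤ ‖x‖) (hxt : ‖x‖ ≤ 1 + t) (η : V) :
    gaussian a (‖x‖⁻¹ • x - η) ≤ exp 1 * gaussian (a / 2) (x - η) := by
  have hradial : ‖x - ‖x‖⁻¹ • x‖ ≤ t := by
    have hx0 : ‖x‖ ≠ 0 := by positivity
    have hfactor : x - ‖x‖⁻¹ • x = (1 - ‖x‖⁻¹) • x := by rw [sub_smul, one_smul]
    rw [hfactor, norm_smul_of_nonneg (sub_nonneg.2 (inv_le_one_of_one_le₀ hx)), sub_mul,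
      inv_mul_cancel₀ hx0]
    linarith
  have htriangle : ‖x - η‖ ≤ t + ‖‖x‖⁻¹ • x - η‖ :=
    (norm_sub_le_norm_sub_add_norm_sub _ _ _).trans (by gcongr)
  have hsq : ‖x - η‖ ^ 2 ≤ 2 * t ^ 2 + 2 * ‖‖x‖⁻¹ • x - η‖ ^ 2 := by
    have := pow_le_pow_left₀ (norm_nonneg _) htriangle 2
    linarith [sq_nonneg (t - ‖‖x‖⁻¹ • x - η‖)]
  rw [gaussian, gaussian, ← exp_add]
  refine exp_le_exp.2 ?_
  have := mul_le_mul_of_nonneg_left hsq ha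
  linarith

variable [MeasurableSpace V] [BorelSpace V] [FiniteDimensional ℝ V]

lemma ofReal_mul_volume_ball_le_volume_annulus [Nontrivial V] {t : ℝ} (ht : 0 ≤ t) :
    ENNReal.ofReal t * volume (ball (0 : V) 1) ≤
      volume (ball (0 : V) (1 + t) \ ball (0 : V) 1) := by
  rw [measure_sdiff (ball_subset_ball (by linarith)) measurableSet_ball.nullMeasurableSet
    measure_ball_lt_top.ne,
    Measure.addHaar_ball volume (0 : V) (by linarith : 0 ≤ 1 + t)]
  refine ENNReal.le_sub_of_add_le_right measure_ball_lt_top.ne ?_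
  rw [← add_one_mul]
  gcongr
  rw [← ENNReal.ofReal_one, ← ENNReal.ofReal_add ht zero_le_one]
  refine ENNReal.ofReal_le_ofReal ?_
  rw [add_comm t]
  exact le_self_pow₀ (by linarith) Module.finrank_pos.ne'

namespace IsRoundSphereMeasure

variable {σ : Measure V} [IsFiniteMeasure σ]

/-- By rotation invariance the left-hand integral may be averaged over an annulus of width
`t ≤ a ^ (-1/2)`, on which moving `x` to the sphere costs only a constant factor. -/
lemma lintegral_gaussian_sub_mul_volume_annulus_le (hσ : IsRoundSphereMeasure σ) {a t : ℝ}
    (ha : 0 < a) (hat : a * t ^ 2 ≤ 1) {ξ : V} (hξ : ‖ξ‖ = 1) :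
    (∫⁻ η, ENNReal.ofReal (gaussian a (ξ - η)) ∂σ) *
        volume (ball (0 : V) (1 + t) \ ball (0 : V) 1) ≤
      ENNReal.ofReal (exp 1 * (π / (a / 2)) ^ ((finrank ℝ V : ℝ) / 2)) * σ Set.univ := by
  set R := ball (0 : V) (1 + t) \ ball (0 : V) 1
  calc (∫⁻ η, ENNReal.ofReal (gaussian a (ξ - η)) ∂σ) * volume R
      = ∫⁻ _ in R, ∫⁻ η, ENNReal.ofReal (gaussian a (ξ - η)) ∂σ := by rw [setLIntegral_const]
    _ ≤ ∫⁻ x in R, ∫⁻ η, ENNReal.ofReal (exp 1 * gaussian (a / 2) (x - η)) ∂σ := by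
        refine setLIntegral_mono' (measurableSet_ball.diff measurableSet_ball) fun x hx => ?_
        have hx1 : 1 ≤ ‖x‖ := by simpa using hx.2
        have hxt : ‖x‖ < 1 + t := by simpa using hx.1
        rw [hσ.lintegral_gaussian_sub_congr a (y := ‖x‖⁻¹ • x) (by
          rw [hξ, norm_smul, norm_inv, norm_norm, inv_mul_cancel₀ (by positivity)])]
        gcongr with η
        exact gaussian_inv_norm_smul_sub_le ha.le hat hx1 hxt.le η
    _ ≤ ∫⁻ x, ∫⁻ η, ENNReal.ofReal (exp 1 * gaussian (a / 2) (x - η)) ∂σ :=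
        setLIntegral_le_lintegral _ _
    _ = ∫⁻ η, ∫⁻ x : V, ENNReal.ofReal (exp 1 * gaussian (a / 2) (x - η)) ∂volume ∂σ := by
        refine lintegral_lintegral_swap (Measurable.aemeasurable ?_)
        have := measurable_gaussian (V := V) (a / 2)
        simp only [Function.uncurry_def]
        fun_prop
    _ = _ := by
        simp_rw [ENNReal.ofReal_mul (exp_pos 1).le]
        simp_rw [lintegral_const_mul' _ _ ENNReal.ofReal_ne_top,
          lintegral_sub_right_eq_self (fun x : V => ENNReal.ofReal (gaussian (a / 2) x)),
          lintegral_gaussian (V := V) (half_pos ha)]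
        rw [lintegral_const, mul_assoc]

lemma exists_gaussianUpperRegular [Nontrivial V] (hσ : IsRoundSphereMeasure σ) :
    ∃ C, GaussianUpperRegular σ C := by
  set d := (finrank ℝ V : ℝ)
  set B := volume.real (ball (0 : V) 1)
  have hB : 0 < B := ENNReal.toReal_pos (measure_ball_pos _ _ one_pos).ne' measure_ball_lt_top.ne
  refine ⟨(exp 1 * (2 * π) ^ (d / 2) * σ.real Set.univ / B).toNNReal, fun a ha => ?_⟩
  filter_upwards [hσ.ae_norm_eq_one] with ξ hξ
  rw [coe_toNNReal _ (by positivity)]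
  set t := (√a)⁻¹ with ht
  have ht0 : 0 < t := by positivity
  have hat : a * t ^ 2 ≤ 1 := by rw [ht, inv_pow, sq_sqrt ha.le, mul_inv_cancel₀ ha.ne']
  have hmul : (∫⁻ η, ENNReal.ofReal (gaussian a (ξ - η)) ∂σ) * ENNReal.ofReal (t * B) ≤
      ENNReal.ofReal (exp 1 * (π / (a / 2)) ^ (d / 2) * σ.real Set.univ) := by
    rw [ENNReal.ofReal_mul ht0.le, ofReal_measureReal, ENNReal.ofReal_mul (by positivity),
      ofReal_measureReal]
    grw [ofReal_mul_volume_ball_le_volume_annulus ht0.le]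
    exact hσ.lintegral_gaussian_sub_mul_volume_annulus_le ha hat hξ
  have hexponent : (π / (a / 2)) ^ (d / 2) = (2 * π) ^ (d / 2) * (a ^ (-(d - 1) / 2) * t) := by
    rw [show π / (a / 2) = 2 * π * a⁻¹ by field_simp, mul_rpow (by positivity) (by positivity),
      inv_rpow ha.le, ← rpow_neg ha.le, ht, sqrt_eq_rpow, ← rpow_neg ha.le, ← rpow_add ha]
    ring_nf
  rw [← ENNReal.le_div_iff_mul_le (.inl (by simpa using (by positivity : 0 < t * B)))
    (.inl ENNReal.ofReal_ne_top), ← ENNReal.ofReal_div_of_pos (by positivity), hexponent] at hmul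
  refine hmul.trans_eq (congrArg ENNReal.ofReal ?_)
  change _ = _ * a ^ (-(d - 1) / 2)
  field_simp

end IsRoundSphereMeasure

end SphereGaussianRegularity

/-! ### The surface measure of the unit sphere -/

section SurfaceMeasure

variable {V : Type*} [NormedAddCommGroup V] [InnerProductSpace ℝ V]

lemma hemisphere_subset_stereographic_image {v : V} (hv : ‖v‖ = 1) :
    {x ∈ sphere (0 : V) 1 | ⟪v, x⟫ ≤ 0} ⊆
      (fun w : (ℝ ∙ v)ᗮ => (stereoInvFun hv w : V)) '' closedBall 0 2 := by
  rintro x ⟨hx, hvx⟩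
  have hxv : x ≠ v := by
    rintro rfl
    rw [real_inner_self_eq_norm_sq, hv] at hvx
    norm_num at hvx
  refine ⟨stereoToFun v x, ?_, congrArg Subtype.val (stereo_left_inv hv (x := ⟨x, hx⟩) hxv)⟩
  rw [mem_closedBall_zero_iff, stereoToFun_apply, innerSL_apply_apply,
    norm_smul_of_nonneg (div_nonneg zero_le_two (by linarith))]
  calc 2 / (1 - ⟪v, x⟫) * ‖(ℝ ∙ v)ᗮ.orthogonalProjectionOnto x‖ ≤ 2 / 1 * ‖x‖ := by
        gcongr
        · linarith
        · exact Submodule.norm_orthogonalProjectionOnto_apply_le _ _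
    _ = 2 := by rw [mem_sphere_zero_iff_norm.1 hx]; norm_num

variable [FiniteDimensional ℝ V] [MeasurableSpace V] [BorelSpace V]

lemma hausdorffMeasure_hemisphere_lt_top {v : V} (hv : ‖v‖ = 1) :
    μH[(finrank ℝ V : ℝ) - 1] {x ∈ sphere (0 : V) 1 | ⟪v, x⟫ ≤ 0} < ∞ := by
  rw [← natCast_finrank_orthogonal_span_singleton (norm_ne_zero_iff.1 (hv ▸ one_ne_zero) : v ≠ 0)]
  have hsmooth : ContDiff ℝ 1 fun w : (ℝ ∙ v)ᗮ => (stereoInvFun hv w : V) :=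
    contDiff_stereoInvFunAux.comp (ℝ ∙ v)ᗮ.subtypeL.contDiff
  obtain ⟨K, hK⟩ := hsmooth.locallyLipschitz.locallyLipschitzOn.exists_lipschitzOnWith_of_compact
    (isCompact_closedBall (0 : (ℝ ∙ v)ᗮ) 2)
  refine (measure_mono (hemisphere_subset_stereographic_image hv)).trans_lt
    ((hK.hausdorffMeasure_image_le (Nat.cast_nonneg _)).trans_lt ?_)
  exact ENNReal.mul_lt_top (by simp) (isCompact_closedBall _ _).measure_lt_top

lemma hausdorffMeasure_unitSphere_lt_top [Nontrivial V] :
    μH[(finrank ℝ V : ℝ) - 1] (sphere (0 : V) 1) < ∞ := by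
  obtain ⟨v, hv⟩ := exists_norm_eq V zero_le_one
  have hcover : sphere (0 : V) 1 ⊆
      {x ∈ sphere (0 : V) 1 | ⟪v, x⟫ ≤ 0} ∪ {x ∈ sphere (0 : V) 1 | ⟪-v, x⟫ ≤ 0} := fun x hx =>
    (le_total ⟪v, x⟫ 0).imp (⟨hx, ·⟩) fun h => ⟨hx, by simpa [inner_neg_left] using h⟩
  exact (measure_mono hcover).trans_lt (measure_union_lt_top (hausdorffMeasure_hemisphere_lt_top hv)
    (hausdorffMeasure_hemisphere_lt_top (by rwa [norm_neg])))

end SurfaceMeasure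

lemma isRoundSphereMeasure_sphMeasure (n : ℕ) : IsRoundSphereMeasure (sphMeasure n) where
  measurePreserving L := by
    have hpreimage : L.toIsometryEquiv ⁻¹' sphere (0 : Euc n) 1 = sphere 0 1 := by
      ext x
      simp
    have hrestrict := (L.toIsometryEquiv.measurePreserving_hausdorffMeasure
      ((n : ℝ) - 1)).restrict_preimage (isClosed_sphere (x := (0 : Euc n)) (ε := 1)).measurableSet
    rwa [hpreimage] at hrestrict
  ae_norm_eq_one := by
    filter_upwards [ae_restrict_mem
      (isClosed_sphere (x := (0 : Euc n)) (ε := 1)).measurableSet] with ξ hξ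
    exact mem_sphere_zero_iff_norm.1 hξ

lemma isFiniteMeasure_sphMeasure {n : ℕ} [Nonempty (Fin n)] :
    IsFiniteMeasure (sphMeasure n) := by
  refine isFiniteMeasure_restrict.2 (LT.lt.ne ?_)
  simpa only [finrank_euclideanSpace_fin] using hausdorffMeasure_unitSphere_lt_top (V := Euc n)

/-! ### The weak-type estimate -/

section WeakType

variable {V : Type*} [NormedAddCommGroup V] [InnerProductSpace ℝ V] [FiniteDimensional ℝ V]
  [MeasurableSpace V] [BorelSpace V]

theorem restricted_weak_type_endpoint_general (σ : Measure V) [IsFiniteMeasure σ] {s : ℝ}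
    (hs : 1 ≤ s) {C₀ C₁ : ℝ≥0} (hreg : GaussianUpperRegular σ C₀)
    (hdecay : FourierDecay σ ((s - 1) / 2) C₁) {p q : ℝ}
    (hseg :
      (∃ θ : ℝ, 0 < θ ∧ θ < 1 ∧
        1 / p = θ * (1 / 2) + (1 - θ) * (1 / 2) ∧
        1 / q = θ * (1 / 2) + (1 - θ) * ((s - 1) / (2 * (s + 1)))) ∨
      (∃ θ : ℝ, 0 < θ ∧ θ < 1 ∧
        1 / p = θ * (1 / 2) + (1 - θ) * 1 ∧
        1 / q = θ * (1 / 2) + (1 - θ) * 0)) :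
    ∃ C : ℝ≥0, 0 < C ∧ ∀ g : V → ℂ, Measurable g →
      wLorentzNorm volume q (fun x => fourierExt σ g x *
          ((japaneseBracket x ^ (-((s + 1) / (2 * q) - (s - 1) / 2 * (1 - 1 / p))) : ℝ) : ℂ)) ≤
        C * lorentzNorm σ p 1 g := by
  suffices hdual : ∃ γ, 0 ≤ γ ∧ (s + 1) / (2 * q) - (s - 1) / 2 * (1 - 1 / p) = γ ∧
      0 < 1 / p ∧ 0 < 1 / q ∧ 1 / q ≤ 1 ∧ ∃ C, RestrictedDualBound σ γ (1 / p) (1 - 1 / q) C by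
    obtain ⟨γ, hγ, hγe, hp, hq, hq1, C, hC⟩ := hdual
    refine ⟨C / p.toNNReal + 1, by positivity, fun g hg => ?_⟩
    rw [hγe]
    have hq1' : 1 ≤ q := (div_le_one (one_div_pos.1 hq)).1 hq1
    refine (hC.wLorentzNorm_le hγ (one_div_pos.1 hp) hq1' hg).trans ?_
    gcongr
    exact le_self_add
  have hγ : (s + 1) / (2 * q) = (s + 1) / 2 * (1 / q) := by ring
  rw [hγ]
  rcases hseg with ⟨θ, hθ0, hθ1, hp, hq⟩ | ⟨θ, hθ0, hθ1, hp, hq⟩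
  · have hp' : 1 / p = 1 / 2 := by rw [hp]; ring
    have hq' : 1 - 1 / q = 1 / 2 + (1 - 2 * (θ / 2)) / (2 * (1 + (s - 1) / 2)) := by
      rw [hq, show 2 * (1 + (s - 1) / 2) = s + 1 by ring]; field_simp; ring
    have hq0 : 0 ≤ (s - 1) / (2 * (s + 1)) := div_nonneg (by linarith) (by linarith)
    have hq1 : 0 ≤ (1 - 2 * (θ / 2)) / (2 * (1 + (s - 1) / 2)) :=
      div_nonneg (by linarith) (by linarith)
    refine ⟨θ / 2, by positivity, ?_, ?_, ?_, ?_, ?_⟩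
    · rw [hp', hq]; field_simp; ring
    · rw [hp']; norm_num
    · rw [hq]
      have := mul_nonneg (sub_nonneg.2 hθ1.le) hq0
      positivity
    · linarith
    · rw [hp', hq']
      exact exists_restrictedDualBound_half (by linarith) hreg hdecay (by positivity) (by linarith)
  · have hp' : 1 / p = 1 - θ / 2 := by rw [hp]; ring
    have hq' : 1 / q = θ / 2 := by rw [hq]; ring
    rw [hp', hq']
    exact ⟨θ / 2, by positivity, by ring, by linarith, by linarith, by linarith,
      exists_restrictedDualBound_diagonal hreg (by positivity) (by linarith)⟩

end WeakType

/-- With `A = (1/2,1/2)`, `B = (1/2,(n-1)/(2(n+1)))`, `D = (1,0)`: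
if `(1/p,1/q)` lies in the open segment `(A,B)` or `(A,D)` and
`γ = (n+1)/(2q) - (n-1)/(2p')`, then
`‖ ĝdσ ⟨·⟩^{-γ} ‖_{L^{q,∞}(ℝⁿ)} ≤ C ‖g‖_{L^{p,1}(𝕊^{n-1})}`. -/
theorem restricted_weak_type_endpoint (n : ℕ) (hn : 2 ≤ n) (p q : ℝ)
    (hseg :
      (∃ θ : ℝ, 0 < θ ∧ θ < 1 ∧
        1 / p = θ * (1 / 2) + (1 - θ) * (1 / 2) ∧
        1 / q = θ * (1 / 2) + (1 - θ) * (((n : ℝ) - 1) / (2 * ((n : ℝ) + 1)))) ∨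
      (∃ θ : ℝ, 0 < θ ∧ θ < 1 ∧
        1 / p = θ * (1 / 2) + (1 - θ) * 1 ∧
        1 / q = θ * (1 / 2) + (1 - θ) * 0)) :
    ∃ C : ℝ≥0, 0 < C ∧ ∀ g : Euc n → ℂ, Measurable g →
      wLorentzNorm volume q
          (fun x => extOp n g x *
            ((Real.sqrt (1 + ‖x‖ ^ 2)
              ^ (-(((n : ℝ) + 1) / (2 * q) - ((n : ℝ) - 1) / 2 * (1 - 1 / p))) : ℝ) : ℂ))
        ≤ C * lorentzNorm (sphMeasure n) p 1 g := by
  have : Nontrivial (Fin n) := Fin.nontrivial_iff_two_le.2 hn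
  have := isFiniteMeasure_sphMeasure (n := n)
  have hround := isRoundSphereMeasure_sphMeasure n
  obtain ⟨C₀, hreg⟩ := hround.exists_gaussianUpperRegular
  obtain ⟨C₁, hdecay⟩ := hround.exists_fourierDecay
  rw [finrank_euclideanSpace_fin] at hdecay
  exact restricted_weak_type_endpoint_general (sphMeasure n)
    (mod_cast one_le_two.trans hn) hreg hdecay hseg
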